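/- Let μ ≥ 0, 0 < δ < 1, let e ∈ ℝⁿ be a unit vector, and let f be continuous on B_δ ⊂ ℝⁿ with ‖f‖_∞ ≤ 1. If v is a nonnegative viscosity solution of |∇v + e|^μ Δv = f in B_δ, then there exists a constant C > 0 depending only on n and μ such that sup_{B_{δ/2}} v ≤ C ( inf_{B_{δ/2}} v + 2δ ). -/

import Mathlib

open Metric Set Filter
open scoped RealInnerProductSpace Topology

noncomputable section

abbrev E (n : ℕ) : Type := EuclideanSpace ℝ (Fin n)

/-- Laplacian: trace of the second derivative. -/
def lap {n : ℕ} (φ : E n → ℝ) (x : E n) : ℝ :=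
  ∑ i : Fin n, iteratedFDeriv ℝ 2 φ x ![EuclideanSpace.single i 1, EuclideanSpace.single i 1]

def TouchesBelow {n : ℕ} (u φ : E n → ℝ) (x₀ : E n) : Prop :=
  u x₀ = φ x₀ ∧ ∀ᶠ x in 𝓝 x₀, φ x ≤ u x

def TouchesAbove {n : ℕ} (u φ : E n → ℝ) (x₀ : E n) : Prop :=
  u x₀ = φ x₀ ∧ ∀ᶠ x in 𝓝 x₀, u x ≤ φ x

def posSet {n : ℕ} (Ω : Set (E n)) (u : E n → ℝ) : Set (E n) := {x ∈ Ω | 0 < u x}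

def freeBdry {n : ℕ} (Ω : Set (E n)) (u : E n → ℝ) : Set (E n) := frontier (posSet Ω u) ∩ Ω

/-- Viscosity solution of `|∇u|^μ Δu = f` in `Ω⁺(u)`, `|∇u| = Q` on `F(u)`. -/
def ViscSol {n : ℕ} (μ : ℝ) (Ω : Set (E n)) (f Q u : E n → ℝ) : Prop :=
  (∀ φ : E n → ℝ, ContDiff ℝ 2 φ → ∀ x₀ ∈ posSet Ω u,
      (TouchesBelow u φ x₀ → ‖gradient φ x₀‖ ^ μ * lap φ x₀ ≤ f x₀) ∧
      (TouchesAbove u φ x₀ → f x₀ ≤ ‖gradient φ x₀‖ ^ μ * lap φ x₀)) ∧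
  (∀ φ : E n → ℝ, ContDiff ℝ 2 φ → ∀ x₀ ∈ freeBdry Ω u, gradient φ x₀ ≠ 0 →
      (TouchesBelow u (fun x => max (φ x) 0) x₀ → ‖gradient φ x₀‖ ≤ Q x₀) ∧
      (TouchesAbove u (fun x => max (φ x) 0) x₀ → Q x₀ ≤ ‖gradient φ x₀‖))

/-- `S` is a `C^{1,β}` graph in `B`. -/
def IsC1GraphIn {n : ℕ} (β : ℝ) (S B : Set (E n)) : Prop :=
  ∃ ν : E n, ‖ν‖ = 1 ∧
    ∃ g : ((ℝ ∙ ν)ᗮ : Submodule ℝ (E n)) → ℝ,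
      Differentiable ℝ g ∧
      (∃ K : ℝ, ∀ y z : ((ℝ ∙ ν)ᗮ : Submodule ℝ (E n)),
        ‖gradient g y - gradient g z‖ ≤ K * ‖(y : E n) - (z : E n)‖ ^ β) ∧
      S ∩ B = {x ∈ B | ⟪x, ν⟫ = g (Submodule.orthogonalProjectionOnto (ℝ ∙ ν)ᗮ x)}


/-- Viscosity solution of `|∇v + e|^μ Δv = f` in an open set `U`. -/
def ViscSolShift {n : ℕ} (μ : ℝ) (e : E n) (U : Set (E n)) (f v : E n → ℝ) : Prop :=
  ∀ φ : E n → ℝ, ContDiff ℝ 2 φ → ∀ x₀ ∈ U,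
    (TouchesBelow v φ x₀ → ‖gradient φ x₀ + e‖ ^ μ * lap φ x₀ ≤ f x₀) ∧
    (TouchesAbove v φ x₀ → f x₀ ≤ ‖gradient φ x₀ + e‖ ^ μ * lap φ x₀)

/-!
Where a test function has gradient of norm at least `2`, the factor `|∇v + e|^μ` is at least `1`, so
there the equation gives `|Δv| ≤ 1`; nothing else about it is needed.

An interior Lipschitz bound follows by the Ishii–Lions method. If `v` oscillates too much, the
doubled functional `v(x) - v(y) - g(|x - y|) - k|x - c|²` with a concave penalty `g` has an interior
maximum off the diagonal. The slope of `g` forces large gradients there, also for the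
sup-convolutions of `v` and `-v`, which are therefore genuine subsolutions near the two points.
Moving `y` by the reflection of the displacement of `x` makes the sum of the two a subsolution in
one variable, and the concavity of `g` contradicts this. That sums of subsolutions are subsolutions
is seen by comparing each of them with polynomials having the prescribed constant Laplacian.

For the Harnack inequality, let `x₀` maximize `v(x) (ρ - |x - y|)^{2N}` over a ball about `y`. The
Lipschitz bound gives `v ≥ v(x₀)/2` on a ball about `x₀` of radius proportional to `ρ - |x₀ - y|`,
and a radial barrier carries this lower bound over to `y`. A chain of balls concludes.
-/

open scoped Laplacian

/-! ### Calculus of the Laplacian -/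

section Calculus

variable {F : Type*} [NormedAddCommGroup F] [NormedSpace ℝ F] {φ : F → ℝ} {x : F}

theorem hasDerivAt_comp_add_smul (hφ : DifferentiableAt ℝ φ x) (w : F) :
    HasDerivAt (fun t : ℝ => φ (x + t • w)) (fderiv ℝ φ x w) 0 := by
  have hline : HasDerivAt (fun t : ℝ => x + t • w) w 0 := by
    simpa using ((hasDerivAt_id (0 : ℝ)).smul_const w).const_add x
  exact HasFDerivAt.comp_hasDerivAt_of_eq 0 hφ.hasFDerivAt hline (by simp)

theorem tendsto_add_smul_zero (x w : F) :
    Tendsto (fun t : ℝ => x + t • w) (𝓝 0) (𝓝 x) := by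
  simpa using (show Continuous fun t : ℝ => x + t • w by fun_prop).tendsto 0

theorem iteratedFDeriv_two_apply_self_eq_deriv_deriv (hφ : ContDiffAt ℝ 2 φ x) (w : F) :
    iteratedFDeriv ℝ 2 φ x ![w, w] = deriv (deriv fun t : ℝ => φ (x + t • w)) 0 := by
  have hderiv : deriv (fun t : ℝ => φ (x + t • w)) =ᶠ[𝓝 0]
      fun t => fderiv ℝ φ (x + t • w) w := by
    filter_upwards [(tendsto_add_smul_zero x w).eventually (hφ.eventually (by simp))] with t ht
    have hline : HasDerivAt (fun t : ℝ => x + t • w) w t := by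
      simpa using ((hasDerivAt_id t).smul_const w).const_add x
    exact ((ht.differentiableAt (by simp)).hasFDerivAt.comp_hasDerivAt t hline).deriv
  have hfderiv : HasFDerivAt (fderiv ℝ φ) (fderiv ℝ (fderiv ℝ φ) x) x :=
    ((hφ.fderiv_right (m := 1) (by norm_num)).differentiableAt (by simp)).hasFDerivAt
  have hline : HasDerivAt (fun t : ℝ => x + t • w) w 0 := by
    simpa using ((hasDerivAt_id (0 : ℝ)).smul_const w).const_add x
  have hsecond : HasDerivAt (fun t : ℝ => fderiv ℝ φ (x + t • w) w)
      (fderiv ℝ (fderiv ℝ φ) x w w) 0 := by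
    simpa using (hfderiv.comp_hasDerivAt_of_eq 0 hline (by simp)).clm_apply
      (hasDerivAt_const (0 : ℝ) w)
  rw [hderiv.deriv_eq, hsecond.deriv, iteratedFDeriv_two_apply]
  rfl

theorem contDiffAt_comp_add_smul (hφ : ContDiffAt ℝ 2 φ x) (w : F) :
    ContDiffAt ℝ 2 (fun t : ℝ => φ (x + t • w)) 0 := by
  have hline : ContDiffAt ℝ 2 (fun t : ℝ => x + t • w) 0 := by fun_prop
  exact ContDiffAt.comp 0 (by simpa using hφ) hline

theorem deriv_deriv_comp {g h : ℝ → ℝ} {t : ℝ} (hg : ContDiffAt ℝ 2 g (h t))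
    (hh : ContDiffAt ℝ 2 h t) :
    deriv (deriv fun s => g (h s)) t
      = deriv (deriv g) (h t) * deriv h t ^ 2 + deriv g (h t) * deriv (deriv h) t := by
  have hfirst : deriv (fun s => g (h s)) =ᶠ[𝓝 t] fun s => deriv g (h s) * deriv h s := by
    filter_upwards [hh.continuousAt.eventually (hg.eventually (by simp)),
      hh.eventually (by simp)] with s hgs hhs
    exact ((hgs.differentiableAt (by simp)).hasDerivAt.comp s
      (hhs.differentiableAt (by simp)).hasDerivAt).deriv
  have hg' : HasDerivAt (deriv g) (deriv (deriv g) (h t)) (h t) :=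
    ((hg.derivWithin (m := 1) (by norm_num)).differentiableAt (by simp)).hasDerivAt
  have hh' : HasDerivAt (deriv h) (deriv (deriv h) t) t :=
    ((hh.derivWithin (m := 1) (by norm_num)).differentiableAt (by simp)).hasDerivAt
  have hsecond : HasDerivAt (fun s => deriv g (h s) * deriv h s)
      (deriv (deriv g) (h t) * deriv h t * deriv h t + deriv g (h t) * deriv (deriv h) t) t :=
    (hg'.comp t (hh.differentiableAt (by simp)).hasDerivAt).mul hh'
  rw [hfirst.deriv_eq, hsecond.deriv]
  ring

theorem deriv_deriv_nonpos_of_isLocalMax {g : ℝ → ℝ} {t : ℝ} (hg : ContinuousAt g t)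
    (hmax : IsLocalMax g t) : deriv (deriv g) t ≤ 0 := by
  by_contra! hpos
  have hmin : IsLocalMin g t := isLocalMin_of_deriv_deriv_pos hpos hmax.deriv_eq_zero hg
  have hconst : g =ᶠ[𝓝 t] fun _ => g t := by
    filter_upwards [hmax, hmin] with s hle hge using le_antisymm hle hge
  simp [hconst.deriv.deriv_eq] at hpos

end Calculus

section NormSq

variable {F : Type*} [NormedAddCommGroup F] [InnerProductSpace ℝ F]

theorem contDiff_norm_sub_sq (c : F) {m : WithTop ℕ∞} : ContDiff ℝ m fun y => ‖y - c‖ ^ 2 :=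
  (contDiff_id.sub contDiff_const).norm_sq ℝ

theorem fderiv_norm_sub_sq (c x : F) :
    fderiv ℝ (fun y => ‖y - c‖ ^ 2) x = (2 : ℝ) • innerSL ℝ (x - c) := by
  rw [fderiv_comp_sub (f := fun y : F => ‖y‖ ^ 2), fderiv_norm_sq_apply, ofNat_smul_eq_nsmul ℝ]

theorem norm_fderiv_norm_sub_sq (c x : F) :
    ‖fderiv ℝ (fun y => ‖y - c‖ ^ 2) x‖ = 2 * ‖x - c‖ := by
  rw [fderiv_norm_sub_sq, norm_smul, innerSL_apply_norm, Real.norm_ofNat]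

end NormSq

section Laplacian

variable {F : Type*} [NormedAddCommGroup F] [InnerProductSpace ℝ F] [FiniteDimensional ℝ F]
  {φ : F → ℝ} {x : F}

theorem laplacian_eq_sum_deriv_deriv {ι : Type*} [Fintype ι] (b : OrthonormalBasis ι ℝ F)
    (hφ : ContDiffAt ℝ 2 φ x) :
    Δ φ x = ∑ i, deriv (deriv fun t : ℝ => φ (x + t • b i)) 0 := by
  rw [InnerProductSpace.laplacian_eq_iteratedFDeriv_orthonormalBasis φ b]
  exact Finset.sum_congr rfl fun i _ => iteratedFDeriv_two_apply_self_eq_deriv_deriv hφ (b i)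

theorem continuous_laplacian (hφ : ContDiff ℝ 2 φ) : Continuous (Δ φ) := by
  rw [InnerProductSpace.laplacian_eq_iteratedFDeriv_stdOrthonormalBasis]
  have := hφ.continuous_iteratedFDeriv le_rfl
  fun_prop

theorem laplacian_nonpos_of_isLocalMax (hφ : ContDiffAt ℝ 2 φ x) (hmax : IsLocalMax φ x) :
    Δ φ x ≤ 0 := by
  rw [laplacian_eq_sum_deriv_deriv (stdOrthonormalBasis ℝ F) hφ]
  refine Finset.sum_nonpos fun i _ => deriv_deriv_nonpos_of_isLocalMax
    (contDiffAt_comp_add_smul hφ _).continuousAt ?_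
  simpa [IsLocalMax, IsMaxFilter] using (tendsto_add_smul_zero x _).eventually hmax

theorem laplacian_comp_add_linearIsometryEquiv (φ : F → ℝ) (a : F) (R : F ≃ₗᵢ[ℝ] F) (x : F) :
    Δ (fun y => φ (a + R y)) x = Δ φ (a + R x) := by
  set b := stdOrthonormalBasis ℝ F
  rw [InnerProductSpace.laplacian_eq_iteratedFDeriv_orthonormalBasis φ (b.map R),
    InnerProductSpace.laplacian_eq_iteratedFDeriv_orthonormalBasis _ b]
  refine Finset.sum_congr rfl fun i _ => ?_
  have hcomp := R.toContinuousLinearEquiv.iteratedFDerivWithin_comp_right (fun y => φ (a + y))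
    uniqueDiffOn_univ (mem_univ (R x)) 2
  simp only [preimage_univ, iteratedFDerivWithin_univ] at hcomp
  rw [show (fun y => φ (a + R y)) = (fun y => φ (a + y)) ∘ R.toContinuousLinearEquiv from rfl,
    hcomp, iteratedFDeriv_comp_add_left]
  simp only [ContinuousMultilinearMap.compContinuousLinearMap_apply, OrthonormalBasis.map_apply]
  congr 1
  ext j
  fin_cases j <;> rfl

theorem laplacian_comp {g : ℝ → ℝ} (hg : ContDiffAt ℝ 2 g (φ x)) (hφ : ContDiffAt ℝ 2 φ x) :
    Δ (g ∘ φ) x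
      = deriv (deriv g) (φ x) * ‖fderiv ℝ φ x‖ ^ 2 + deriv g (φ x) * Δ φ x := by
  set b := stdOrthonormalBasis ℝ F
  have hline (i) : deriv (deriv fun t : ℝ => g (φ (x + t • b i))) 0
      = deriv (deriv g) (φ x) * (fderiv ℝ φ x (b i)) ^ 2
        + deriv g (φ x) * deriv (deriv fun t : ℝ => φ (x + t • b i)) 0 := by
    rw [deriv_deriv_comp (by simpa using hg) (contDiffAt_comp_add_smul hφ (b i)),
      (hasDerivAt_comp_add_smul (hφ.differentiableAt (by simp)) (b i)).deriv]
    simp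
  rw [laplacian_eq_sum_deriv_deriv b (ContDiffAt.comp x hg hφ), laplacian_eq_sum_deriv_deriv b hφ,
    b.norm_dual, Finset.mul_sum, Finset.mul_sum, ← Finset.sum_add_distrib]
  exact Finset.sum_congr rfl fun i _ => hline i

theorem laplacian_norm_sub_sq (c x : F) :
    Δ (fun y => ‖y - c‖ ^ 2) x = 2 * Module.finrank ℝ F := by
  set b := stdOrthonormalBasis ℝ F
  have hline (i) : deriv (deriv fun t : ℝ => ‖x + t • b i - c‖ ^ 2) 0 = 2 := by
    have hquad : (fun t : ℝ => ‖x + t • b i - c‖ ^ 2)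
        = fun t => ‖x - c‖ ^ 2 + 2 * ⟪x - c, b i⟫ * t + t ^ 2 := by
      funext t
      rw [add_sub_right_comm, norm_add_sq_real, inner_smul_right, norm_smul, b.norm_eq_one,
        mul_one, Real.norm_eq_abs, sq_abs]
      ring
    have hderiv : deriv (fun t : ℝ => ‖x - c‖ ^ 2 + 2 * ⟪x - c, b i⟫ * t + t ^ 2)
        = fun t => 2 * ⟪x - c, b i⟫ + 2 * t := by
      funext t
      simpa using ((((hasDerivAt_id t).const_mul (2 * ⟪x - c, b i⟫)).const_add
        (‖x - c‖ ^ 2)).fun_add (hasDerivAt_pow 2 t)).deriv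
    rw [hquad, hderiv]
    simp
  rw [laplacian_eq_sum_deriv_deriv b (contDiff_norm_sub_sq c).contDiffAt,
    Finset.sum_congr rfl fun i _ => hline i]
  simp [mul_comm]

theorem laplacian_comp_norm_sub_sq {g : ℝ → ℝ} {c : F}
    (hg : ContDiffAt ℝ 2 g (‖x - c‖ ^ 2)) :
    Δ (fun y => g (‖y - c‖ ^ 2)) x = 4 * ‖x - c‖ ^ 2 * deriv (deriv g) (‖x - c‖ ^ 2)
      + 2 * Module.finrank ℝ F * deriv g (‖x - c‖ ^ 2) := by
  rw [← Function.comp_def g fun y => ‖y - c‖ ^ 2,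
    laplacian_comp (φ := fun y => ‖y - c‖ ^ 2) hg (contDiff_norm_sub_sq c).contDiffAt,
    norm_fderiv_norm_sub_sq, laplacian_norm_sub_sq]
  ring

theorem laplacian_continuousLinearMap (L : F →L[ℝ] ℝ) (x : F) :
    Δ (fun y => L y) x = 0 := by
  rw [laplacian_eq_sum_deriv_deriv (stdOrthonormalBasis ℝ F) L.contDiff.contDiffAt]
  simp

theorem laplacian_comp_inner {g : ℝ → ℝ} (ν : F) (hg : ContDiffAt ℝ 2 g ⟪ν, x⟫) :
    Δ (fun y => g ⟪ν, y⟫) x = deriv (deriv g) ⟪ν, x⟫ * ‖ν‖ ^ 2 := by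
  have hcomp := laplacian_comp (φ := innerSL ℝ ν) hg (innerSL ℝ ν).contDiff.contDiffAt
  rw [(innerSL ℝ ν).fderiv, innerSL_apply_norm, laplacian_continuousLinearMap] at hcomp
  simpa [Function.comp_def] using hcomp

end Laplacian

/-! ### Viscosity subsolutions and comparison -/

section Viscosity

variable {F : Type*} [NormedAddCommGroup F] [InnerProductSpace ℝ F] [FiniteDimensional ℝ F]

/-- `u` satisfies `Δu ≥ a` in `Ω`, in the viscosity sense, wherever `|∇u| ≥ γ`: only test functions
whose gradient has norm at least `γ` are required to satisfy the inequality. For `γ = 0` this is the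
usual notion of a viscosity subsolution of `Δu = a`. -/
def IsViscSubsolution (γ a : ℝ) (Ω : Set F) (u : F → ℝ) : Prop :=
  ∀ ⦃φ : F → ℝ⦄, ContDiff ℝ 2 φ → ∀ ⦃x⦄, x ∈ Ω → IsLocalMax (fun y => u y - φ y) x →
    γ ≤ ‖fderiv ℝ φ x‖ → a ≤ Δ φ x

namespace IsViscSubsolution

variable {γ a b : ℝ} {Ω K : Set F} {u w φ : F → ℝ}

theorem mono_set (hu : IsViscSubsolution γ a Ω u) {Ω' : Set F} (hΩ : Ω' ⊆ Ω) :
    IsViscSubsolution γ a Ω' u :=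
  fun _φ hφ _x hx => hu hφ (hΩ hx)

theorem sub_contDiff (hu : IsViscSubsolution 0 a Ω u) (hφ : ContDiff ℝ 2 φ)
    (hlap : ∀ x ∈ Ω, Δ φ x ≤ b) : IsViscSubsolution 0 (a - b) Ω fun x => u x - φ x := by
  intro ψ hψ x hx hmax _
  have hle : a ≤ Δ (φ + ψ) x :=
    hu (hφ.add hψ) hx (by simpa [sub_sub] using hmax) (norm_nonneg _)
  rw [hφ.contDiffAt.laplacian_add hψ.contDiffAt] at hle
  linarith [hlap x hx]

theorem comp_add_linearIsometryEquiv (hu : IsViscSubsolution 0 a Ω u) (x₀ : F)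
    (R : F ≃ₗᵢ[ℝ] F) :
    IsViscSubsolution 0 a {z | x₀ + R z ∈ Ω} fun z => u (x₀ + R z) := by
  intro φ hφ z hz hmax _
  set ψ : F → ℝ := fun x => φ (-R.symm x₀ + R.symm x)
  have hψ : ContDiff ℝ 2 ψ := hφ.comp (contDiff_const.add R.symm.contDiff)
  have hψR (y : F) : -R.symm x₀ + R.symm (x₀ + R y) = y := by simp
  have hlap : Δ ψ (x₀ + R z) = Δ φ z := by
    rw [laplacian_comp_add_linearIsometryEquiv, hψR]
  refine hlap ▸ hu hψ hz ?_ (norm_nonneg _)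
  have htendsto : Tendsto (fun x => -R.symm x₀ + R.symm x) (𝓝 (x₀ + R z)) (𝓝 z) := by
    have hcont : Continuous fun x => -R.symm x₀ + R.symm x := by fun_prop
    simpa [hψR] using hcont.tendsto (x₀ + R z)
  filter_upwards [htendsto.eventually hmax] with x hx
  simpa [ψ] using hx

theorem sub_le_of_forall_laplacian_lt (hu : IsViscSubsolution γ a Ω u) (hΩ : IsOpen Ω)
    (hK : IsCompact K) (hΩK : Ω ⊆ K) (hcont : ContinuousOn u K) (hφ : ContDiff ℝ 2 φ)
    (hgrad : ∀ x ∈ Ω, γ ≤ ‖fderiv ℝ φ x‖) (hlap : ∀ x ∈ Ω, Δ φ x < a)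
    {M : ℝ} (hbdry : ∀ x ∈ K \ Ω, u x - φ x ≤ M) : ∀ x ∈ K, u x - φ x ≤ M := by
  intro x hx
  obtain ⟨m, hmK, hmax⟩ :=
    hK.exists_isMaxOn ⟨x, hx⟩ (hcont.sub hφ.continuous.continuousOn)
  suffices hm : m ∉ Ω from
    (hmax hx).trans (hbdry m ⟨hmK, hm⟩)
  intro hm
  have hloc : IsLocalMax (fun y => u y - φ y) m :=
    hmax.isLocalMax (mem_of_superset (hΩ.mem_nhds hm) hΩK)
  exact (hlap m hm).not_ge (hu hφ hm hloc (hgrad m hm))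

theorem le_of_forall_mem_sphere_le [Nontrivial F] {c : F} {r M : ℝ}
    (hu : IsViscSubsolution 0 0 (ball c r) u) (hcont : ContinuousOn u (closedBall c r))
    (hM : ∀ x ∈ sphere c r, u x ≤ M) : ∀ x ∈ closedBall c r, u x ≤ M := by
  intro x hx
  refine le_of_forall_pos_le_add fun ε hε => ?_
  set η : ℝ := ε / (r ^ 2 + 1)
  have hη : 0 < η := by positivity
  set q : F → ℝ := fun z => ‖z - c‖ ^ 2
  have hq : ContDiff ℝ 2 q := contDiff_norm_sub_sq c
  have hlap (y : F) : Δ ((-η) • q) y < 0 := by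
    rw [InnerProductSpace.laplacian_smul _ hq.contDiffAt, laplacian_norm_sub_sq, smul_eq_mul]
    have := Module.finrank_pos (R := ℝ) (M := F)
    exact mul_neg_of_neg_of_pos (neg_neg_of_pos hη) (by positivity)
  have hbdry : ∀ y ∈ closedBall c r \ ball c r, u y - ((-η) • q) y ≤ M + η * r ^ 2 := by
    intro y hy
    rw [closedBall_sdiff_ball] at hy
    simpa [q, mem_sphere_iff_norm.1 hy] using hM y hy
  have hle : u x - ((-η) • q) x ≤ M + η * r ^ 2 :=
    hu.sub_le_of_forall_laplacian_lt isOpen_ball (isCompact_closedBall c r) ball_subset_closedBall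
      hcont (hq.const_smul (-η)) (fun _ _ => norm_nonneg _) (fun y _ => hlap y) hbdry x hx
  have hηq : 0 ≤ η * q x := by positivity
  have hηε : η * (r ^ 2 + 1) = ε := div_mul_cancel₀ ε (by positivity)
  rw [Pi.smul_apply, smul_eq_mul] at hle
  linarith

end IsViscSubsolution

theorem isViscSubsolution_of_le_laplacian {φ : F → ℝ} (hφ : ContDiff ℝ 2 φ) {a : ℝ} {Ω : Set F}
    (hlap : ∀ x ∈ Ω, a ≤ Δ φ x) (γ : ℝ) : IsViscSubsolution γ a Ω φ := by
  intro ψ hψ x hx hmax _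
  have hle : Δ (φ - ψ) x ≤ 0 := laplacian_nonpos_of_isLocalMax (hφ.sub hψ).contDiffAt hmax
  rw [hφ.contDiffAt.laplacian_sub hψ.contDiffAt] at hle
  linarith [hlap x hx]

theorem eq_zero_of_laplacian_eq_zero_of_sphere [Nontrivial F] {φ : F → ℝ} (hφ : ContDiff ℝ 2 φ)
    {c : F} {r : ℝ} (hlap : ∀ x ∈ ball c r, Δ φ x = 0) (hsphere : ∀ x ∈ sphere c r, φ x = 0) :
    ∀ x ∈ closedBall c r, φ x = 0 := by
  have hle : ∀ x ∈ closedBall c r, φ x ≤ 0 :=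
    (isViscSubsolution_of_le_laplacian hφ (fun x hx => (hlap x hx).ge) 0).le_of_forall_mem_sphere_le
      hφ.continuous.continuousOn fun x hx => (hsphere x hx).le
  have hge : ∀ x ∈ closedBall c r, (-φ) x ≤ 0 := by
    have hlap_neg : ∀ x ∈ ball c r, 0 ≤ Δ (-φ) x := fun x hx => by
      rw [InnerProductSpace.laplacian_neg, Pi.neg_apply, hlap x hx, neg_zero]
    exact (isViscSubsolution_of_le_laplacian hφ.neg hlap_neg 0).le_of_forall_mem_sphere_le
      hφ.neg.continuous.continuousOn fun x hx => by simp [hsphere x hx]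
  exact fun x hx => le_antisymm (hle x hx) (neg_nonpos.1 (hge x hx))

end Viscosity

/-! ### Polynomial solutions of the Poisson equation in a ball -/

section Polynomial

open MvPolynomial

variable {ι : Type*} [Fintype ι] {F : Type*} [NormedAddCommGroup F] [InnerProductSpace ℝ F]

/-- The function on `F` defined by a polynomial in the coordinates of an orthonormal basis. -/
def polyFun (b : OrthonormalBasis ι ℝ F) (p : MvPolynomial ι ℝ) (x : F) : ℝ :=
  eval (fun i => ⟪b i, x⟫) p

/-- The Laplacian `∑ᵢ ∂ᵢ²` as a linear endomorphism of the space of polynomials. -/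
def polyLaplacian : MvPolynomial ι ℝ →ₗ[ℝ] MvPolynomial ι ℝ :=
  ∑ i, (pderiv i).toLinearMap ∘ₗ (pderiv i).toLinearMap

/-- The polynomial `ρ² - |x - a|²`, which vanishes on the sphere of radius `ρ` about `a`. -/
def spherePoly (b : OrthonormalBasis ι ℝ F) (a : F) (ρ : ℝ) : MvPolynomial ι ℝ :=
  C (ρ ^ 2) - ∑ i, (X i - C ⟪b i, a⟫) ^ 2

theorem totalDegree_pderiv_le {σ R : Type*} [CommSemiring R] {m : ℕ} (i : σ)
    {p : MvPolynomial σ R} (hp : p.totalDegree ≤ m + 1) : (pderiv i p).totalDegree ≤ m := by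
  rw [← mem_restrictTotalDegree, p.as_sum, map_sum]
  refine Submodule.sum_mem _ fun s hs => ?_
  rw [pderiv_monomial, mem_restrictTotalDegree]
  by_cases hsi : s i = 0
  · simp [hsi]
  have hsplit : (s - Finsupp.single i 1).degree + 1 = s.degree := by
    have hle : Finsupp.single i 1 ≤ s := Finsupp.single_le_iff.2 (Nat.one_le_iff_ne_zero.2 hsi)
    conv_rhs => rw [← tsub_add_cancel_of_le hle]
    simp
  have hdeg : s.degree ≤ m + 1 := (le_totalDegree hs).trans hp
  exact (totalDegree_monomial_le _ _).trans
    (show (s - Finsupp.single i 1).degree ≤ m by lia)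

theorem totalDegree_polyLaplacian_le {m : ℕ} {p : MvPolynomial ι ℝ}
    (hp : p.totalDegree ≤ m + 2) : (polyLaplacian p).totalDegree ≤ m := by
  rw [← mem_restrictTotalDegree, polyLaplacian, LinearMap.sum_apply]
  exact Submodule.sum_mem _ fun i _ => (mem_restrictTotalDegree _ _ _).2
    (totalDegree_pderiv_le i (totalDegree_pderiv_le i hp))

variable (b : OrthonormalBasis ι ℝ F)

theorem contDiff_polyFun (p : MvPolynomial ι ℝ) {m : WithTop ℕ∞} :
    ContDiff ℝ m (polyFun b p) := by
  unfold polyFun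
  induction p using MvPolynomial.induction_on with
  | C a => simpa using contDiff_const
  | add p q hp hq => simpa using hp.add hq
  | mul_X p i hp => simpa using hp.mul (contDiff_const.inner ℝ contDiff_id)

theorem hasDerivAt_polyFun_add_smul (p : MvPolynomial ι ℝ) (x : F) (i : ι) (t : ℝ) :
    HasDerivAt (fun t : ℝ => polyFun b p (x + t • b i))
      (polyFun b (pderiv i p) (x + t • b i)) t := by
  classical
  unfold polyFun
  induction p using MvPolynomial.induction_on with
  | C a => simpa using hasDerivAt_const t a
  | add p q hp hq => simpa using hp.fun_add hq
  | mul_X p j hp =>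
    have hcoord : HasDerivAt (fun t : ℝ => ⟪b j, x + t • b i⟫) ⟪b j, b i⟫ t := by
      simpa [inner_add_right, inner_smul_right]
        using ((hasDerivAt_id t).mul_const ⟪b j, b i⟫).const_add ⟪b j, x⟫
    have hpderiv : eval (fun k => ⟪b k, x + t • b i⟫) (pderiv i (X j)) = ⟪b j, b i⟫ := by
      rw [pderiv_X, Pi.single_apply, b.inner_eq_ite]
      split_ifs <;> simp
    simp only [map_mul, eval_X, Derivation.leibniz, smul_eq_mul, map_add, hpderiv]
    exact (hp.fun_mul hcoord).congr_deriv (by ring)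

theorem laplacian_polyFun [FiniteDimensional ℝ F] (p : MvPolynomial ι ℝ) (x : F) :
    Δ (polyFun b p) x = polyFun b (polyLaplacian p) x := by
  have hline (i) : deriv (deriv fun t : ℝ => polyFun b p (x + t • b i)) 0
      = polyFun b (pderiv i (pderiv i p)) x := by
    rw [funext fun t => (hasDerivAt_polyFun_add_smul b p x i t).deriv,
      (hasDerivAt_polyFun_add_smul b _ x i 0).deriv, zero_smul, add_zero]
  rw [laplacian_eq_sum_deriv_deriv b (contDiff_polyFun b p).contDiffAt,
    Finset.sum_congr rfl fun i _ => hline i]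
  simp [polyLaplacian, polyFun]

theorem polyFun_add (p q : MvPolynomial ι ℝ) (x : F) :
    polyFun b (p + q) x = polyFun b p x + polyFun b q x := by
  simp [polyFun]

theorem polyFun_mul (p q : MvPolynomial ι ℝ) (x : F) :
    polyFun b (p * q) x = polyFun b p x * polyFun b q x := by
  simp [polyFun]

theorem polyFun_spherePoly (a : F) (ρ : ℝ) (x : F) :
    polyFun b (spherePoly b a ρ) x = ρ ^ 2 - ‖x - a‖ ^ 2 := by
  simp [polyFun, spherePoly, ← b.sum_sq_inner_right (x - a), inner_sub_right]

theorem totalDegree_spherePoly_le (a : F) (ρ : ℝ) : (spherePoly b a ρ).totalDegree ≤ 2 := by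
  rw [← mem_restrictTotalDegree]
  refine Submodule.sub_mem _
    ((mem_restrictTotalDegree _ _ _).2 ((totalDegree_C _).trans_le zero_le_two))
    (Submodule.sum_mem _ fun i _ => (mem_restrictTotalDegree _ _ _).2 ?_)
  have hlinear : (X i - C ⟪b i, a⟫ : MvPolynomial ι ℝ).totalDegree ≤ 1 :=
    (totalDegree_sub _ _).trans (by simp)
  exact (totalDegree_pow _ _).trans (by lia)

theorem eq_zero_of_polyFun_eq_zero_on_ball {p : MvPolynomial ι ℝ} {a : F} {ρ : ℝ} (hρ : 0 < ρ)
    (hp : ∀ x ∈ ball a ρ, polyFun b p x = 0) : p = 0 := by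
  let point (y : ι → ℝ) : F := b.repr.symm (WithLp.toLp 2 y)
  have hcoord (y : ι → ℝ) (i : ι) : ⟪b i, point y⟫ = y i := by
    simp [point, ← b.repr_apply_apply]
  have hpoint : point (fun i => ⟪b i, a⟫) = a := by
    simp [point, ← b.repr_apply_apply]
  have hcont : Continuous point := b.repr.symm.continuous.comp (PiLp.continuous_toLp 2 _)
  obtain ⟨s, hs, hball⟩ := Metric.continuous_iff.1 hcont (fun i => ⟪b i, a⟫) ρ hρ
  refine funext_set (fun i => ball ⟪b i, a⟫ s) (fun i => ?_) fun y hy => ?_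
  · rw [Real.ball_eq_Ioo]
    exact Ioo_infinite (by linarith)
  · rw [← ball_pi _ hs, mem_ball] at hy
    simpa [polyFun, hcoord] using hp (point y) (by simpa [hpoint] using hball y hy)

variable [FiniteDimensional ℝ F] [Nontrivial F]

theorem eq_zero_of_polyLaplacian_spherePoly_mul_eq_zero {q : MvPolynomial ι ℝ} {a : F} {ρ : ℝ}
    (hρ : 0 < ρ) (hq : polyLaplacian (spherePoly b a ρ * q) = 0) : q = 0 := by
  have hmul (x : F) :
      polyFun b (spherePoly b a ρ * q) x = (ρ ^ 2 - ‖x - a‖ ^ 2) * polyFun b q x := by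
    rw [polyFun_mul, polyFun_spherePoly]
  refine eq_zero_of_polyFun_eq_zero_on_ball (a := a) b hρ fun x hx => ?_
  have hzero : polyFun b (spherePoly b a ρ * q) x = 0 := by
    refine eq_zero_of_laplacian_eq_zero_of_sphere (contDiff_polyFun b _) (fun y _ => ?_)
      (fun y hy => ?_) x (ball_subset_closedBall hx)
    · rw [laplacian_polyFun, hq]
      simp [polyFun]
    · rw [hmul, mem_sphere_iff_norm.1 hy, sub_self, zero_mul]
  rw [hmul, mul_eq_zero] at hzero
  refine hzero.resolve_left (sub_pos.2 ?_).ne'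
  exact pow_lt_pow_left₀ (mem_ball_iff_norm.1 hx) (norm_nonneg _) two_ne_zero

-- `q ↦ Δ((ρ² - |x - a|²) q)` preserves each finite-dimensional space of polynomials of bounded
-- degree and is injective there by the maximum principle, hence surjective.
theorem exists_polyLaplacian_spherePoly_mul_eq (a : F) {ρ : ℝ} (hρ : 0 < ρ)
    (p : MvPolynomial ι ℝ) : ∃ q, polyLaplacian (spherePoly b a ρ * q) = p := by
  let T : MvPolynomial ι ℝ →ₗ[ℝ] MvPolynomial ι ℝ :=
    polyLaplacian ∘ₗ LinearMap.mulLeft ℝ (spherePoly b a ρ)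
  let V := restrictTotalDegree ι ℝ p.totalDegree
  have hTV : ∀ q ∈ V, T q ∈ V := by
    intro q hq
    rw [mem_restrictTotalDegree] at hq ⊢
    refine totalDegree_polyLaplacian_le ((totalDegree_mul _ _).trans ?_)
    have := totalDegree_spherePoly_le b a ρ
    lia
  have hinj : Function.Injective (T.restrict hTV) := by
    rw [← LinearMap.ker_eq_bot, LinearMap.ker_eq_bot']
    intro q hq
    exact Subtype.ext
      (eq_zero_of_polyLaplacian_spherePoly_mul_eq_zero b hρ (congrArg Subtype.val hq))
  obtain ⟨q, hq⟩ := LinearMap.injective_iff_surjective.1 hinj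
    ⟨p, (mem_restrictTotalDegree _ _ _).2 le_rfl⟩
  exact ⟨q, congrArg Subtype.val hq⟩

end Polynomial

section Poisson

variable {F : Type*} [NormedAddCommGroup F] [InnerProductSpace ℝ F]

theorem exists_polyFun_near {ι : Type*} [Fintype ι] (b : OrthonormalBasis ι ℝ F) {K : Set F}
    (hK : IsCompact K) {g : F → ℝ} (hg : ContinuousOn g K) {ε : ℝ} (hε : 0 < ε) :
    ∃ p : MvPolynomial ι ℝ, ∀ x ∈ K, |polyFun b p x - g x| < ε := by
  have : CompactSpace K := isCompact_iff_compactSpace.1 hK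
  let coord (i : ι) : C(K, ℝ) := ⟨fun x => ⟪b i, (x : F)⟫, by fun_prop⟩
  let A : Subalgebra ℝ C(K, ℝ) := (MvPolynomial.aeval coord).range
  have hsep : A.SeparatesPoints := by
    intro x y hxy
    obtain ⟨i, hi⟩ : ∃ i, ⟪b i, (x : F)⟫ ≠ ⟪b i, (y : F)⟫ := by
      by_contra! hall
      refine hxy (Subtype.ext (b.repr.injective ?_))
      ext i
      simpa [b.repr_apply_apply] using hall i
    exact ⟨coord i, ⟨coord i, ⟨MvPolynomial.X i, by simp⟩, rfl⟩, hi⟩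
  obtain ⟨⟨_, p, rfl⟩, hnear⟩ :=
    ContinuousMap.exists_mem_subalgebra_near_continuousMap_of_separatesPoints A hsep
      ⟨_, hg.domRestrict⟩ ε hε
  refine ⟨p, fun x hx => ?_⟩
  have heval : MvPolynomial.aeval coord p ⟨x, hx⟩ = polyFun b p x :=
    MvPolynomial.comp_aeval_apply (f := coord) (ContinuousMap.evalAlgHom ℝ ℝ (⟨x, hx⟩ : K)) p
  have hle := (ContinuousMap.norm_coe_le_norm _ (⟨x, hx⟩ : K)).trans_lt hnear
  rw [← heval]
  exact hle

theorem exists_laplacian_eq_const_near_on_sphere [FiniteDimensional ℝ F] [Nontrivial F]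
    (a : F) {ρ : ℝ} (hρ : 0 < ρ) {g : F → ℝ} (hg : ContinuousOn g (sphere a ρ)) (c : ℝ)
    {ε : ℝ} (hε : 0 < ε) :
    ∃ H : F → ℝ, ContDiff ℝ 2 H ∧ (∀ x, Δ H x = c) ∧ ∀ x ∈ sphere a ρ, |H x - g x| < ε := by
  set b := stdOrthonormalBasis ℝ F
  obtain ⟨p, hp⟩ := exists_polyFun_near b (isCompact_sphere a ρ) hg hε
  obtain ⟨q, hq⟩ :=
    exists_polyLaplacian_spherePoly_mul_eq b a hρ (MvPolynomial.C c - polyLaplacian p)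
  refine ⟨polyFun b (p + spherePoly b a ρ * q), contDiff_polyFun b _, fun x => ?_, fun x hx => ?_⟩
  · rw [laplacian_polyFun, map_add, hq, add_sub_cancel]
    simp [polyFun]
  · rw [polyFun_add, polyFun_mul, polyFun_spherePoly, mem_sphere_iff_norm.1 hx, sub_self, zero_mul,
      add_zero]
    exact hp x hx

end Poisson

/-! ### Sums of viscosity subsolutions -/

section Sum

variable {F : Type*} [NormedAddCommGroup F] [InnerProductSpace ℝ F] [FiniteDimensional ℝ F]
  [Nontrivial F]

namespace IsViscSubsolution

variable {a b ε r : ℝ} {x₀ : F} {Ω : Set F} {u w φ : F → ℝ}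

theorem exists_contDiff_majorant (hu : IsViscSubsolution 0 a (ball x₀ r) u) (hr : 0 < r)
    (hcont : ContinuousOn u (closedBall x₀ r)) (hε : 0 < ε) :
    ∃ H : F → ℝ, ContDiff ℝ 2 H ∧ (∀ x, Δ H x = a) ∧ (∀ x ∈ closedBall x₀ r, u x ≤ H x) ∧
      ∀ x ∈ sphere x₀ r, H x ≤ u x + ε := by
  have hcont_shift : ContinuousOn (fun x => u x + ε / 2) (sphere x₀ r) :=
    (hcont.mono sphere_subset_closedBall).add continuousOn_const
  obtain ⟨H, hH, hlap, hnear⟩ :=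
    exists_laplacian_eq_const_near_on_sphere x₀ hr hcont_shift a (half_pos hε)
  have hsub : IsViscSubsolution 0 0 (ball x₀ r) fun x => u x - H x := by
    simpa using hu.sub_contDiff hH fun x _ => (hlap x).le
  have hle := hsub.le_of_forall_mem_sphere_le (M := 0)
    (hcont.sub hH.continuous.continuousOn) fun x hx => by linarith [(abs_lt.1 (hnear x hx)).1]
  exact ⟨H, hH, hlap, fun x hx => sub_nonpos.1 (hle x hx),
    fun x hx => by linarith [(abs_lt.1 (hnear x hx)).2]⟩

-- Replacing `u` and `w` near `x₀` by smooth solutions lying just above them turns the claim into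
-- the classical maximum principle.
theorem exists_lt_laplacian_of_isMaxOn_add (hu : IsViscSubsolution 0 a (ball x₀ r) u)
    (hw : IsViscSubsolution 0 b (ball x₀ r) w) (hr : 0 < r)
    (hucont : ContinuousOn u (closedBall x₀ r)) (hwcont : ContinuousOn w (closedBall x₀ r))
    (hφ : ContDiff ℝ 2 φ) (hmax : IsMaxOn (fun x => u x + w x - φ x) (closedBall x₀ r) x₀)
    {η : ℝ} (hη : 0 < η) : ∃ x ∈ ball x₀ r, a + b < Δ φ x + η := by
  by_contra! hlap
  have hdim : 0 < Module.finrank ℝ F := Module.finrank_pos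
  set θ : ℝ := η / (2 * Module.finrank ℝ F)
  have hθ : 0 < θ := by positivity
  have hε : 0 < θ * r ^ 2 / 4 := div_pos (mul_pos hθ (pow_pos hr 2)) four_pos
  obtain ⟨H₁, hH₁, hlap₁, hge₁, hle₁⟩ := hu.exists_contDiff_majorant hr hucont hε
  obtain ⟨H₂, hH₂, hlap₂, hge₂, hle₂⟩ := hw.exists_contDiff_majorant hr hwcont hε
  set Q : F → ℝ := fun x => ‖x - x₀‖ ^ 2
  have hθQ : ContDiff ℝ 2 (θ • Q) := contDiff_const.smul (contDiff_norm_sub_sq x₀)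
  have hlap_sum : ∀ x ∈ ball x₀ r, a + b ≤ Δ (H₁ + H₂) x := fun x _ => by
    rw [hH₁.contDiffAt.laplacian_add hH₂.contDiffAt, hlap₁, hlap₂]
  have hsum : IsViscSubsolution 0 (a + b) (ball x₀ r) (H₁ + H₂) :=
    isViscSubsolution_of_le_laplacian (hH₁.add hH₂) hlap_sum 0
  have hlap_test : ∀ x ∈ ball x₀ r, Δ (φ + θ • Q) x ≤ a + b := by
    intro x hx
    rw [hφ.contDiffAt.laplacian_add hθQ.contDiffAt,
      InnerProductSpace.laplacian_smul θ (contDiff_norm_sub_sq x₀).contDiffAt,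
      laplacian_norm_sub_sq, smul_eq_mul, div_mul_cancel₀ η (by positivity)]
    exact hlap x hx
  have hsphere : ∀ x ∈ sphere x₀ r, (H₁ + H₂) x - (φ + θ • Q) x
      ≤ u x₀ + w x₀ - φ x₀ - θ * r ^ 2 / 2 := by
    intro x hx
    have hx_max : u x + w x - φ x ≤ u x₀ + w x₀ - φ x₀ := hmax (sphere_subset_closedBall hx)
    simp only [Q, Pi.add_apply, Pi.smul_apply, smul_eq_mul, mem_sphere_iff_norm.1 hx]
    linarith [hle₁ x hx, hle₂ x hx]
  have hx₀ : x₀ ∈ closedBall x₀ r := mem_closedBall_self hr.le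
  have hcenter : (H₁ + H₂) x₀ - (φ + θ • Q) x₀ ≤ u x₀ + w x₀ - φ x₀ - θ * r ^ 2 / 2 :=
    le_of_forall_mem_sphere_le (by simpa using hsum.sub_contDiff (hφ.add hθQ) hlap_test)
      ((hH₁.add hH₂).sub (hφ.add hθQ)).continuous.continuousOn hsphere x₀ hx₀
  simp only [Q, Pi.add_apply, Pi.smul_apply, sub_self, norm_zero, smul_eq_mul] at hcenter
  linarith [hge₁ x₀ hx₀, hge₂ x₀ hx₀]

theorem add (hu : IsViscSubsolution 0 a Ω u) (hw : IsViscSubsolution 0 b Ω w) (hΩ : IsOpen Ω)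
    (hucont : ContinuousOn u Ω) (hwcont : ContinuousOn w Ω) :
    IsViscSubsolution 0 (a + b) Ω fun x => u x + w x := by
  intro φ hφ x₀ hx₀ hmax _
  by_contra! hlt
  set η : ℝ := (a + b - Δ φ x₀) / 2
  have hη : 0 < η := half_pos (sub_pos.2 hlt)
  have hlap : ∀ᶠ x in 𝓝 x₀, Δ φ x < Δ φ x₀ + η :=
    (continuous_laplacian hφ).continuousAt.eventually_lt continuousAt_const (by linarith)
  obtain ⟨r, hr, hball⟩ := nhds_basis_closedBall.mem_iff.1
    (inter_mem (hΩ.mem_nhds hx₀) (inter_mem hmax hlap))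
  have hballΩ : closedBall x₀ r ⊆ Ω := fun x hx => (hball hx).1
  have hsub : ball x₀ r ⊆ Ω := ball_subset_closedBall.trans hballΩ
  obtain ⟨x, hx, hlt'⟩ := (hu.mono_set hsub).exists_lt_laplacian_of_isMaxOn_add (hw.mono_set hsub)
    hr (hucont.mono hballΩ) (hwcont.mono hballΩ) hφ (fun x hx => (hball hx).2.1) hη
  have hx' : Δ φ x < Δ φ x₀ + η := (hball (ball_subset_closedBall hx)).2.2
  have hη_def : η = (a + b - Δ φ x₀) / 2 := rfl
  linarith

end IsViscSubsolution

end Sum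

/-! ### Sup-convolutions -/

section SupConv

variable {F : Type*} [NormedAddCommGroup F]

/-- The sup-convolution over `K` of `u` with the paraboloid `-κ‖·‖²`: a regularization of `u` from
above which keeps viscosity subsolutions. -/
def supConv (K : Set F) (κ : ℝ) (u : F → ℝ) (x : F) : ℝ :=
  ⨆ z : K, (u z - κ * ‖x - z‖ ^ 2)

/-- The points of `K` at which the supremum defining `supConv K κ u x` is attained. -/
def supConvArgmax (K : Set F) (κ : ℝ) (u : F → ℝ) (x : F) : Set F :=
  {z ∈ K | supConv K κ u x = u z - κ * ‖x - z‖ ^ 2}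

variable {K : Set F} {κ : ℝ} {u : F → ℝ}

theorem continuous_sub_mul_norm_sub_sq (hu : ContinuousOn u K) (κ : ℝ) :
    Continuous fun p : F × K => u p.2 - κ * ‖p.1 - p.2‖ ^ 2 :=
  ((continuousOn_iff_continuous_domRestrict.1 hu).comp continuous_snd).sub (by fun_prop)

theorem continuous_supConv (hK : IsCompact K) (hu : ContinuousOn u K) :
    Continuous (supConv K κ u) := by
  have := isCompact_iff_compactSpace.1 hK
  have hcont : Continuous ↿fun (x : F) (z : K) => u z - κ * ‖x - z‖ ^ 2 :=
    continuous_sub_mul_norm_sub_sq hu κ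
  simpa only [image_univ, sSup_range] using! isCompact_univ.continuous_sSup hcont

theorem sub_le_supConv (hK : IsCompact K) (hu : ContinuousOn u K) {z : F} (hz : z ∈ K) (x : F) :
    u z - κ * ‖x - z‖ ^ 2 ≤ supConv K κ u x := by
  have := isCompact_iff_compactSpace.1 hK
  have hcont : Continuous fun z : K => u z - κ * ‖x - z‖ ^ 2 :=
    (continuous_sub_mul_norm_sub_sq hu κ).comp (Continuous.prodMk_right x)
  exact le_ciSup (isCompact_range hcont).bddAbove ⟨z, hz⟩

theorem le_supConv (hK : IsCompact K) (hu : ContinuousOn u K) {x : F} (hx : x ∈ K) :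
    u x ≤ supConv K κ u x := by
  simpa using sub_le_supConv (κ := κ) hK hu hx x

theorem nonempty_supConvArgmax (hK : IsCompact K) (hne : K.Nonempty) (hu : ContinuousOn u K)
    (x : F) : (supConvArgmax K κ u x).Nonempty := by
  have hcont : ContinuousOn (fun z => u z - κ * ‖x - z‖ ^ 2) K := by fun_prop
  obtain ⟨z, hz, hmax⟩ := hK.exists_isMaxOn hne hcont
  have := hne.to_subtype
  exact ⟨z, hz, le_antisymm (ciSup_le fun y => hmax y.2) (sub_le_supConv hK hu hz x)⟩

theorem supConv_le (hne : K.Nonempty) (hκ : 0 ≤ κ) {M : ℝ} (hM : ∀ z ∈ K, u z ≤ M) (x : F) :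
    supConv K κ u x ≤ M := by
  have := hne.to_subtype
  exact ciSup_le fun z => (sub_le_self _ (by positivity)).trans (hM z z.2)

theorem eventually_forall_mem_supConvArgmax (hK : IsCompact K) (hu : ContinuousOn u K)
    {P : Set (F × F)} (hP : IsOpen P) {x₀ : F} (hx₀ : ∀ z ∈ supConvArgmax K κ u x₀, (x₀, z) ∈ P) :
    ∀ᶠ x in 𝓝 x₀, ∀ z ∈ supConvArgmax K κ u x, (x, z) ∈ P := by
  have := isCompact_iff_compactSpace.1 hK
  have hsup : Continuous fun p : F × K => supConv K κ u p.1 :=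
    (continuous_supConv hK hu).comp continuous_fst
  have hopen : IsOpen {p : F × K | supConv K κ u p.1 = u p.2 - κ * ‖p.1 - p.2‖ ^ 2 →
      (p.1, (p.2 : F)) ∈ P} := by
    simp only [imp_iff_not_or, ofPred_or]
    exact (isClosed_eq hsup (continuous_sub_mul_norm_sub_sq hu κ)).isOpen_compl.union
      (hP.preimage (by fun_prop))
  have hforall : ∀ᶠ x in 𝓝 x₀, ∀ z ∈ (univ : Set K),
      supConv K κ u x = u z - κ * ‖x - z‖ ^ 2 → (x, (z : F)) ∈ P :=
    isCompact_univ.eventually_forall_of_forall_eventually fun z _ =>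
      hopen.mem_nhds fun hz => hx₀ z ⟨z.2, hz⟩
  filter_upwards [hforall] with x hx z hz using hx ⟨z, hz.1⟩ trivial hz.2

theorem eventually_supConvArgmax_subset_closedBall (hK : IsCompact K) (hu : ContinuousOn u K)
    {s : ℝ} (hs : 0 < s) :
    ∀ᶠ κ in atTop, ∀ x ∈ K, supConvArgmax K κ u x ⊆ closedBall x s := by
  obtain ⟨B, hB⟩ := hK.exists_bound_of_continuousOn hu
  filter_upwards [eventually_ge_atTop (2 * B / s ^ 2), eventually_gt_atTop 0] with κ hκ hκ_pos
  intro x hx z hz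
  have hle : κ * ‖x - z‖ ^ 2 ≤ 2 * B := by
    linarith [hz.2 ▸ le_supConv (κ := κ) hK hu hx, (abs_le.1 (hB x hx)).1, (abs_le.1 (hB z hz.1)).2]
  rw [mem_closedBall_iff_norm', ← abs_norm, ← abs_of_pos hs, ← sq_le_sq]
  exact le_of_mul_le_mul_left (hle.trans ((div_le_iff₀ (by positivity)).1 hκ)) hκ_pos

theorem eventually_supConv_lt_add (hK : IsCompact K) (hu : ContinuousOn u K) {ε : ℝ} (hε : 0 < ε) :
    ∀ᶠ κ in atTop, ∀ x ∈ K, supConv K κ u x < u x + ε := by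
  obtain ⟨s, hs, hunif⟩ := Metric.uniformContinuousOn_iff_le.1
    (hK.uniformContinuousOn_of_continuous hu) (ε / 2) (half_pos hε)
  filter_upwards [eventually_supConvArgmax_subset_closedBall hK hu hs, eventually_ge_atTop 0]
    with κ hnear hκ x hx
  obtain ⟨z, hz⟩ := nonempty_supConvArgmax (κ := κ) hK ⟨x, hx⟩ hu x
  have huz : u z - u x ≤ ε / 2 := (le_abs_self _).trans (hunif z hz.1 x hx (hnear x hx hz))
  have hpenalty : 0 ≤ κ * ‖x - z‖ ^ 2 := by positivity
  linarith [hz.2]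

theorem exists_supConv_add_supConv_neg_lt (hK : IsCompact K) (hu : ContinuousOn u K) {s ε : ℝ}
    (hs : 0 < s) (hε : 0 < ε) :
    ∃ κ ≥ 0, (∀ x ∈ K, supConvArgmax K κ u x ⊆ closedBall x s) ∧
      (∀ x ∈ K, supConvArgmax K κ (fun z => -u z) x ⊆ closedBall x s) ∧
      ∀ x ∈ K, supConv K κ u x + supConv K κ (fun z => -u z) x < ε := by
  obtain ⟨κ, hκ, hnear, hnear_neg, hclose, hclose_neg⟩ := ((eventually_ge_atTop (0 : ℝ)).and <|
    (eventually_supConvArgmax_subset_closedBall hK hu hs).and <|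
    (eventually_supConvArgmax_subset_closedBall hK hu.fun_neg hs).and <|
    (eventually_supConv_lt_add hK hu (half_pos hε)).and <|
    eventually_supConv_lt_add hK hu.fun_neg (half_pos hε)).exists
  exact ⟨κ, hκ, hnear, hnear_neg, fun x hx => by linarith [hclose x hx, hclose_neg x hx]⟩

variable [InnerProductSpace ℝ F]

theorem norm_eq_of_isLocalMax_supConv_sub (hK : IsCompact K) (hu : ContinuousOn u K) (hκ : 0 ≤ κ)
    {ψ : F → ℝ} {ψ' : F →L[ℝ] ℝ} {x z : F} (hψ : HasFDerivAt ψ ψ' x)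
    (hmax : IsLocalMax (fun y => supConv K κ u y - ψ y) x) (hz : z ∈ supConvArgmax K κ u x) :
    ‖ψ'‖ = 2 * κ * ‖x - z‖ := by
  have hmax' : IsLocalMax (fun y => u z - κ * ‖y - z‖ ^ 2 - ψ y) x := by
    filter_upwards [hmax] with y hy
    linarith [sub_le_supConv (κ := κ) hK hu hz.1 y, hz.2]
  have hsq := ((contDiff_norm_sub_sq z).differentiable two_ne_zero x).hasFDerivAt
  rw [fderiv_norm_sub_sq] at hsq
  have hzero := hmax'.hasFDerivAt_eq_zero (((hsq.const_mul κ).const_sub (u z)).sub hψ)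
  rw [← sub_eq_zero.1 hzero, norm_neg, norm_smul, norm_smul, innerSL_apply_norm,
    Real.norm_of_nonneg hκ, Real.norm_two]
  ring

variable [FiniteDimensional ℝ F]

-- Translating a test function for the sup-convolution at `x` by `x - z` gives one for `u` at `z`.
theorem isViscSubsolution_supConv {γ a : ℝ} {Ω : Set F}
    (hsub : IsViscSubsolution γ a (interior K) u) (hK : IsCompact K) (hne : K.Nonempty)
    (hu : ContinuousOn u K) (hκ : 0 ≤ κ)
    (hΩ : ∀ x ∈ Ω, ∀ z ∈ supConvArgmax K κ u x, z ∈ interior K ∧ γ ≤ 2 * κ * ‖x - z‖) :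
    IsViscSubsolution 0 a Ω (supConv K κ u) := by
  intro ψ hψ x hx hmax _
  obtain ⟨z, hz⟩ := nonempty_supConvArgmax (κ := κ) hK hne hu x
  obtain ⟨hzK, hγ⟩ := hΩ x hx z hz
  set φ : F → ℝ := fun y => ψ (x - z + y)
  have hφ : ContDiff ℝ 2 φ := hψ.comp (contDiff_const.add contDiff_id)
  have hderiv : fderiv ℝ φ z = fderiv ℝ ψ x := by
    rw [fderiv_comp_add_left, sub_add_cancel]
  have hlap : Δ φ z = Δ ψ x := by
    simpa using laplacian_comp_add_linearIsometryEquiv ψ (x - z) (LinearIsometryEquiv.refl ℝ F) z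
  have htendsto : Tendsto (fun y => x - z + y) (𝓝 z) (𝓝 x) := by
    simpa using (continuous_const_add (x - z)).tendsto z
  have hmax' : IsLocalMax (fun y => u y - φ y) z := by
    filter_upwards [htendsto.eventually hmax, mem_interior_iff_mem_nhds.1 hzK] with y hy hyK
    have hle := sub_le_supConv (κ := κ) hK hu hyK (x - z + y)
    rw [add_sub_cancel_right] at hle
    simp only [φ, sub_add_cancel]
    linarith [hz.2]
  refine hlap ▸ hsub hφ hzK hmax' ?_
  rwa [hderiv, norm_eq_of_isLocalMax_supConv_sub hK hu hκ
    (hψ.differentiable two_ne_zero x).hasFDerivAt hmax hz]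

end SupConv

/-! ### Doubling of variables -/

section Doubling

variable {F : Type*} [NormedAddCommGroup F]

/-- The Ishii–Lions functional: `g` penalizes the distance of the two variables, and the quadratic
term localizes the first of them near `c`. -/
def doubled (g : ℝ → ℝ) (k : ℝ) (c : F) (u w : F → ℝ) (p : F × F) : ℝ :=
  u p.1 + w p.2 - g ‖p.1 - p.2‖ - k * ‖p.1 - c‖ ^ 2

variable [InnerProductSpace ℝ F] {g : ℝ → ℝ} {k κ : ℝ} {c x y z : F} {K : Set F} {u w : F → ℝ}

theorem exists_hasFDerivAt_comp_norm_sub (hxy : x ≠ y) (hg : DifferentiableAt ℝ g ‖x - y‖) :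
    ∃ ψ' : F →L[ℝ] ℝ, HasFDerivAt (fun z => g ‖z - y‖) ψ' x ∧ ‖ψ'‖ = |deriv g ‖x - y‖| := by
  have : Nontrivial F := ⟨x, y, hxy⟩
  have hnorm : DifferentiableAt ℝ (‖·‖) (x - y) :=
    (contDiffAt_norm ℝ (sub_ne_zero.2 hxy)).differentiableAt one_ne_zero
  have hsub : HasFDerivAt (fun z => ‖z - y‖) (fderiv ℝ (‖·‖) (x - y)) x := by
    simpa using! hnorm.hasFDerivAt.comp x ((hasFDerivAt_id x).sub_const y)
  refine ⟨_, hg.hasDerivAt.comp_hasFDerivAt x hsub, ?_⟩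
  rw [norm_smul, norm_fderiv_norm hnorm, mul_one, Real.norm_eq_abs]

theorem le_of_isLocalMax_doubled_supConv_left
    (hmax : IsLocalMax (doubled g k c (supConv K κ u) w) (x, y)) (hxy : x ≠ y)
    (hg : DifferentiableAt ℝ g ‖x - y‖) (hK : IsCompact K) (hu : ContinuousOn u K) (hκ : 0 ≤ κ)
    (hk : 0 ≤ k) (hz : z ∈ supConvArgmax K κ u x) :
    |deriv g ‖x - y‖| - 2 * k * ‖x - c‖ ≤ 2 * κ * ‖x - z‖ := by
  obtain ⟨ψ', hψ, hψ_norm⟩ := exists_hasFDerivAt_comp_norm_sub hxy hg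
  have hsq := (((contDiff_norm_sub_sq c).differentiable two_ne_zero x).hasFDerivAt).const_mul k
  have hmax_x : IsLocalMax
      (fun x' => supConv K κ u x' - (g ‖x' - y‖ + k * ‖x' - c‖ ^ 2)) x := by
    have htendsto : Tendsto (fun x' => (x', y)) (𝓝 x) (𝓝 (x, y)) :=
      (Continuous.prodMk_left y).tendsto x
    filter_upwards [htendsto.eventually hmax] with x' hx'
    simp only [doubled] at hx'
    linarith
  rw [← norm_eq_of_isLocalMax_supConv_sub hK hu hκ (hψ.add hsq) hmax_x hz, ← hψ_norm]
  refine le_trans (le_of_eq ?_) (norm_sub_le_norm_add _ _)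
  rw [norm_smul, norm_fderiv_norm_sub_sq, Real.norm_of_nonneg hk]
  ring

theorem eq_of_isLocalMax_doubled_supConv_right
    (hmax : IsLocalMax (doubled g k c u (supConv K κ w)) (x, y)) (hxy : x ≠ y)
    (hg : DifferentiableAt ℝ g ‖x - y‖) (hK : IsCompact K) (hw : ContinuousOn w K) (hκ : 0 ≤ κ)
    (hz : z ∈ supConvArgmax K κ w y) : |deriv g ‖x - y‖| = 2 * κ * ‖y - z‖ := by
  rw [norm_sub_rev] at hg ⊢
  obtain ⟨ψ', hψ, hψ_norm⟩ := exists_hasFDerivAt_comp_norm_sub hxy.symm hg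
  have hmax_y : IsLocalMax (fun y' => supConv K κ w y' - g ‖y' - x‖) y := by
    have htendsto : Tendsto (fun y' => (x, y')) (𝓝 y) (𝓝 (x, y)) :=
      (Continuous.prodMk_right x).tendsto y
    filter_upwards [htendsto.eventually hmax] with y' hy'
    simp only [doubled, norm_sub_rev x] at hy'
    linarith
  rw [← hψ_norm, norm_eq_of_isLocalMax_supConv_sub hK hw hκ hψ hmax_y hz]

theorem reflection_orthogonal_singleton_apply {ν : F} (hν : ‖ν‖ = 1) (z : F) :
    (ℝ ∙ ν)ᗮ.reflection z = z - (2 * ⟪ν, z⟫) • ν := by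
  rw [Submodule.reflection_orthogonal_apply, Submodule.reflection_singleton_apply, hν]
  simp only [RCLike.ofReal_real_eq_id, id_eq, one_pow, div_one]
  module

theorem eventually_norm_add_sub_add_reflection (hxy : x ≠ y) :
    ∀ᶠ z in 𝓝 (0 : F),
      ‖x + z - (y + (ℝ ∙ (‖x - y‖⁻¹ • (x - y)))ᗮ.reflection z)‖
        = ‖x - y‖ + 2 * ⟪‖x - y‖⁻¹ • (x - y), z⟫ := by
  set ν : F := ‖x - y‖⁻¹ • (x - y)
  have hd : 0 < ‖x - y‖ := norm_pos_iff.2 (sub_ne_zero.2 hxy)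
  have hν : ‖ν‖ = 1 := norm_smul_inv_norm (𝕜 := ℝ) (sub_ne_zero.2 hxy)
  have hdν : x - y = ‖x - y‖ • ν := by simp [ν, hd.ne']
  have hpos : ∀ᶠ z in 𝓝 (0 : F), 0 < ‖x - y‖ + 2 * ⟪ν, z⟫ := by
    have hcont : Continuous fun z : F => ‖x - y‖ + 2 * ⟪ν, z⟫ := by fun_prop
    exact hcont.continuousAt.eventually (lt_mem_nhds (by simpa using hd))
  filter_upwards [hpos] with z hz
  have hdiff : x + z - (y + (ℝ ∙ ν)ᗮ.reflection z) = (‖x - y‖ + 2 * ⟪ν, z⟫) • ν := by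
    rw [reflection_orthogonal_singleton_apply hν, add_smul, ← hdν]
    abel
  rw [hdiff, norm_smul, hν, mul_one, Real.norm_of_nonneg hz.le]

variable [FiniteDimensional ℝ F]

theorem laplacian_comp_inner_add_norm_sub_sq (hg : ContDiff ℝ 2 g) (d : ℝ) {ν : F} (hν : ‖ν‖ = 1) :
    Δ (fun z => g (d + 2 * ⟪ν, z⟫) + k * ‖z - c‖ ^ 2) 0
      = 4 * deriv (deriv g) d + 2 * Module.finrank ℝ F * k := by
  set h : ℝ → ℝ := fun s => g (d + 2 * s)
  have hh : ContDiff ℝ 2 h := by fun_prop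
  have hderiv {f : ℝ → ℝ} (s : ℝ) : deriv (fun s => f (d + 2 * s)) s = 2 * deriv f (d + 2 * s) := by
    rw [deriv_comp_mul_left 2 (fun s => f (d + s)), deriv_comp_const_add, smul_eq_mul]
  have hderiv₂ : deriv (deriv h) 0 = 4 * deriv (deriv g) d := by
    rw [funext hderiv, deriv_const_mul_field, hderiv, mul_zero, add_zero]
    ring
  have hsq := contDiff_norm_sub_sq (m := 2) c
  have hinner : ContDiff ℝ 2 fun z => h ⟪ν, z⟫ :=
    hh.comp (contDiff_const.inner ℝ contDiff_id)
  have hksq : ContDiff ℝ 2 (k • fun z => ‖z - c‖ ^ 2) := contDiff_const.smul hsq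
  change Δ ((fun z => h ⟪ν, z⟫) + k • fun z => ‖z - c‖ ^ 2) 0 = _
  rw [hinner.contDiffAt.laplacian_add hksq.contDiffAt,
    InnerProductSpace.laplacian_smul k hsq.contDiffAt, laplacian_norm_sub_sq,
    laplacian_comp_inner ν hh.contDiffAt, inner_zero_right, hderiv₂, hν, smul_eq_mul]
  ring

-- Moving the two points by `z` and by the reflection of `z` keeps their difference on a line, so
-- along this motion the penalty `g` contributes only its second derivative.
theorem IsViscSubsolution.le_of_isLocalMax_doubled {a b : ℝ} {Ω₁ Ω₂ : Set F}
    (hu : IsViscSubsolution 0 a Ω₁ u) (hw : IsViscSubsolution 0 b Ω₂ w) (hΩ₁ : IsOpen Ω₁)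
    (hΩ₂ : IsOpen Ω₂) (hucont : ContinuousOn u Ω₁) (hwcont : ContinuousOn w Ω₂) (hx : x ∈ Ω₁)
    (hy : y ∈ Ω₂) (hxy : x ≠ y) (hg : ContDiff ℝ 2 g)
    (hmax : IsLocalMax (doubled g k c u w) (x, y)) :
    a + b ≤ 4 * deriv (deriv g) ‖x - y‖ + 2 * Module.finrank ℝ F * k := by
  have : Nontrivial F := ⟨x, y, hxy⟩
  set ν : F := ‖x - y‖⁻¹ • (x - y)
  have hν : ‖ν‖ = 1 := norm_smul_inv_norm (𝕜 := ℝ) (sub_ne_zero.2 hxy)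
  set R : F ≃ₗᵢ[ℝ] F := (ℝ ∙ ν)ᗮ.reflection
  set I : F ≃ₗᵢ[ℝ] F := LinearIsometryEquiv.refl ℝ F
  set Ω : Set F := {z | x + I z ∈ Ω₁} ∩ {z | y + R z ∈ Ω₂}
  have hcont_u : ContinuousOn (fun z => u (x + I z)) Ω :=
    hucont.comp (by fun_prop) fun z hz => hz.1
  have hcont_w : ContinuousOn (fun z => w (y + R z)) Ω :=
    hwcont.comp (by fun_prop) fun z hz => hz.2
  have hΩ : IsOpen Ω := (hΩ₁.preimage (by fun_prop)).inter (hΩ₂.preimage (by fun_prop))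
  have hsum : IsViscSubsolution 0 (a + b) Ω fun z => u (x + I z) + w (y + R z) :=
    ((hu.comp_add_linearIsometryEquiv x I).mono_set inter_subset_left).add
      ((hw.comp_add_linearIsometryEquiv y R).mono_set inter_subset_right) hΩ hcont_u hcont_w
  have hψ : ContDiff ℝ 2 fun z : F =>
      g (‖x - y‖ + 2 * ⟪ν, z⟫) + k * ‖z - (c - x)‖ ^ 2 :=
    (hg.comp (contDiff_const.add (contDiff_const.mul (contDiff_const.inner ℝ contDiff_id)))).add
      (contDiff_const.mul (contDiff_norm_sub_sq (c - x)))
  rw [← laplacian_comp_inner_add_norm_sub_sq (c := c - x) hg ‖x - y‖ hν]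
  refine hsum hψ ⟨by simpa [I] using hx, by simpa using hy⟩ ?_ (norm_nonneg _)
  have htendsto : Tendsto (fun z => (x + z, y + R z)) (𝓝 0) (𝓝 (x, y)) := by
    have hcont : Continuous fun z => (x + z, y + R z) := by fun_prop
    simpa using hcont.tendsto 0
  filter_upwards [htendsto.eventually hmax, eventually_norm_add_sub_add_reflection hxy]
    with z hz hnorm
  simp only [doubled] at hz
  rw [hnorm] at hz
  simp only [I, LinearIsometryEquiv.coe_refl, id, map_zero, add_zero, inner_zero_right, mul_zero,
    zero_sub, norm_neg, norm_sub_rev c x]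
  rw [show z - (c - x) = x + z - c by abel]
  linarith

end Doubling

/-! ### The interior Lipschitz estimate -/

section Lipschitz

variable {F : Type*} [NormedAddCommGroup F] [InnerProductSpace ℝ F] [FiniteDimensional ℝ F]
  {g : ℝ → ℝ} {k κ : ℝ} {c x y : F} {K : Set F} {u w : F → ℝ}

namespace IsViscSubsolution

theorem exists_isOpen_supConv {γ a : ℝ} (hsub : IsViscSubsolution γ a (interior K) u)
    (hK : IsCompact K) (hne : K.Nonempty) (hu : ContinuousOn u K) (hκ : 0 ≤ κ)
    (hmem_interior : supConvArgmax K κ u x ⊆ interior K)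
    (hgrad : ∀ z ∈ supConvArgmax K κ u x, γ < 2 * κ * ‖x - z‖) :
    ∃ Ω : Set F, IsOpen Ω ∧ x ∈ Ω ∧ IsViscSubsolution 0 a Ω (supConv K κ u) := by
  have hcont : Continuous fun p : F × F => 2 * κ * ‖p.1 - p.2‖ := by fun_prop
  have hopen : IsOpen {p : F × F | p.2 ∈ interior K ∧ γ < 2 * κ * ‖p.1 - p.2‖} :=
    (isOpen_interior.preimage continuous_snd).and (isOpen_lt continuous_const hcont)
  obtain ⟨Ω, hΩ, hΩ_open, hxΩ⟩ := _root_.eventually_nhds_iff.1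
    (eventually_forall_mem_supConvArgmax hK hu hopen fun z hz => ⟨hmem_interior hz, hgrad z hz⟩)
  exact ⟨Ω, hΩ_open, hxΩ, isViscSubsolution_supConv hsub hK hne hu hκ fun x' hx' z hz =>
    ⟨(hΩ x' hx' z hz).1, (hΩ x' hx' z hz).2.le⟩⟩

theorem le_of_isLocalMax_doubled_supConv {γ a b : ℝ} (hu : IsViscSubsolution γ a (interior K) u)
    (hw : IsViscSubsolution γ b (interior K) w) (hK : IsCompact K) (hne : K.Nonempty)
    (hucont : ContinuousOn u K) (hwcont : ContinuousOn w K) (hκ : 0 ≤ κ) (hk : 0 ≤ k)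
    (hg : ContDiff ℝ 2 g) (hxy : x ≠ y) (hx : supConvArgmax K κ u x ⊆ interior K)
    (hy : supConvArgmax K κ w y ⊆ interior K) (hγ : γ + 2 * k * ‖x - c‖ < |deriv g ‖x - y‖|)
    (hmax : IsLocalMax (doubled g k c (supConv K κ u) (supConv K κ w)) (x, y)) :
    a + b ≤ 4 * deriv (deriv g) ‖x - y‖ + 2 * Module.finrank ℝ F * k := by
  have hg_diff : DifferentiableAt ℝ g ‖x - y‖ := hg.differentiable two_ne_zero _
  have hgrad_x : ∀ z ∈ supConvArgmax K κ u x, γ < 2 * κ * ‖x - z‖ := fun z hz => by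
    linarith [le_of_isLocalMax_doubled_supConv_left hmax hxy hg_diff hK hucont hκ hk hz]
  have hgrad_y : ∀ z ∈ supConvArgmax K κ w y, γ < 2 * κ * ‖y - z‖ := fun z hz => by
    have : 0 ≤ 2 * k * ‖x - c‖ := by positivity
    linarith [eq_of_isLocalMax_doubled_supConv_right hmax hxy hg_diff hK hwcont hκ hz]
  obtain ⟨Ω₁, hΩ₁, hxΩ₁, hsub₁⟩ := hu.exists_isOpen_supConv hK hne hucont hκ hx hgrad_x
  obtain ⟨Ω₂, hΩ₂, hyΩ₂, hsub₂⟩ := hw.exists_isOpen_supConv hK hne hwcont hκ hy hgrad_y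
  exact hsub₁.le_of_isLocalMax_doubled hsub₂ hΩ₁ hΩ₂ (continuous_supConv hK hucont).continuousOn
    (continuous_supConv hK hwcont).continuousOn hxΩ₁ hyΩ₂ hxy hg hmax

end IsViscSubsolution

theorem isCompact_setOf_norm_sub_le (c : F) (s t : ℝ) :
    IsCompact {p : F × F | ‖p.1 - c‖ ≤ s ∧ ‖p.1 - p.2‖ ≤ t} := by
  have hclosed : IsClosed {p : F × F | ‖p.1 - c‖ ≤ s ∧ ‖p.1 - p.2‖ ≤ t} :=
    (isClosed_le (f := fun p : F × F => ‖p.1 - c‖) (by fun_prop) continuous_const).and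
      (isClosed_le (f := fun p : F × F => ‖p.1 - p.2‖) (by fun_prop) continuous_const)
  refine ((isCompact_closedBall c s).prod (isCompact_closedBall c (s + t))).of_isClosed_subset
    hclosed fun p hp => ⟨mem_closedBall_iff_norm.2 hp.1, mem_closedBall_iff_norm.2 ?_⟩
  calc ‖p.2 - c‖ ≤ ‖p.2 - p.1‖ + ‖p.1 - c‖ := norm_sub_le_norm_sub_add_norm_sub ..
    _ ≤ s + t := by rw [norm_sub_rev]; linarith [hp.1, hp.2]

theorem exists_isLocalMax_doubled {M s t : ℝ} (hu : Continuous u) (hw : Continuous w)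
    (hg : Continuous g) (hM : ∀ x y, u x + w y ≤ M) (hg_nonneg : ∀ τ ∈ Icc 0 t, 0 ≤ g τ)
    (hgt : M ≤ g t) (hs : 0 ≤ s) (hk : 0 ≤ k) (hks : M ≤ k * s ^ 2) (hy : ‖c - y‖ ≤ t)
    (hpos : 0 < doubled g k c u w (c, y))
    (hdiag : ∀ x ∈ closedBall c s, u x + w x < doubled g k c u w (c, y)) :
    ∃ x₀ y₀, x₀ ∈ ball c s ∧ ‖x₀ - y₀‖ < t ∧ x₀ ≠ y₀ ∧
      IsLocalMax (doubled g k c u w) (x₀, y₀) := by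
  have hcont : Continuous (doubled g k c u w) := by unfold doubled; fun_prop
  obtain ⟨⟨x₀, y₀⟩, ⟨hx₀, hy₀⟩, hmax⟩ := (isCompact_setOf_norm_sub_le c s t).exists_isMaxOn
    ⟨(c, y), by simpa using hs, hy⟩ hcont.continuousOn
  have hval : doubled g k c u w (c, y)
      ≤ u x₀ + w y₀ - g ‖x₀ - y₀‖ - k * ‖x₀ - c‖ ^ 2 := hmax ⟨by simpa using hs, hy⟩
  have hg₀ : 0 ≤ g ‖x₀ - y₀‖ := hg_nonneg _ ⟨norm_nonneg _, hy₀⟩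
  have hk₀ : 0 ≤ k * ‖x₀ - c‖ ^ 2 := by positivity
  have hxs : ‖x₀ - c‖ < s := hx₀.lt_of_ne fun h => by rw [h] at hval; linarith [hM x₀ y₀]
  have hyt : ‖x₀ - y₀‖ < t := hy₀.lt_of_ne fun h => by rw [h] at hval; linarith [hM x₀ y₀]
  refine ⟨x₀, y₀, mem_ball_iff_norm.2 hxs, hyt, fun h => ?_, ?_⟩
  · subst h
    linarith [hdiag x₀ (mem_closedBall_iff_norm.2 hx₀)]
  · have hopen : IsOpen {p : F × F | ‖p.1 - c‖ < s ∧ ‖p.1 - p.2‖ < t} :=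
      (isOpen_lt (f := fun p : F × F => ‖p.1 - c‖) (by fun_prop) continuous_const).and
        (isOpen_lt (f := fun p : F × F => ‖p.1 - p.2‖) (by fun_prop) continuous_const)
    filter_upwards [hopen.mem_nhds ⟨hxs, hyt⟩] with p hp using hmax ⟨hp.1.le, hp.2.le⟩

/-- The concave penalty of the doubling argument: its slope is about `L` and its second derivative
`-2L/r` beats the quadratic localization. -/
def concavePenalty (L r t : ℝ) : ℝ := L * (t - t ^ 2 / r)

theorem contDiff_concavePenalty (L r : ℝ) : ContDiff ℝ 2 (concavePenalty L r) := by
  unfold concavePenalty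
  fun_prop

theorem deriv_concavePenalty (L r : ℝ) :
    deriv (concavePenalty L r) = fun t => L * (1 - 2 * t / r) := by
  funext t
  have hderiv := ((hasDerivAt_id t).fun_sub ((hasDerivAt_pow 2 t).div_const r)).const_mul L
  simpa only [Nat.cast_ofNat, Nat.add_one_sub_one, pow_one] using! hderiv.deriv

theorem deriv_deriv_concavePenalty (L r t : ℝ) :
    deriv (deriv (concavePenalty L r)) t = -(2 * L / r) := by
  have hderiv := ((((hasDerivAt_id' t).const_mul 2).div_const r).const_sub 1).const_mul L
  rw [deriv_concavePenalty, hderiv.deriv]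
  ring

theorem concavePenalty_nonneg {L r t : ℝ} (hL : 0 ≤ L) (hr : 0 < r) (ht : t ∈ Icc 0 r) :
    0 ≤ concavePenalty L r t :=
  mul_nonneg hL (sub_nonneg.2 ((div_le_iff₀ hr).2 (by nlinarith [ht.1, ht.2])))

theorem le_concavePenalty_div_four {m M r : ℝ} (hm : 0 ≤ m) (hM : 0 ≤ M) (hr : 0 < r) :
    M ≤ concavePenalty ((m + 14) * (M / r)) r (r / 4) := by
  have heq : concavePenalty ((m + 14) * (M / r)) r (r / 4) = 3 / 16 * (m + 14) * M := by
    rw [concavePenalty]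
    field_simp
    ring
  nlinarith

namespace IsViscSubsolution

variable {r M : ℝ}

theorem not_isLocalMax_doubled_supConv_concavePenalty (hr : 0 < r) (hr₁ : r ≤ 1) (hM : r ≤ M)
    (hucont : ContinuousOn u (closedBall c r)) (hwcont : ContinuousOn w (closedBall c r))
    (hu : IsViscSubsolution 2 (-1) (ball c r) u) (hw : IsViscSubsolution 2 (-1) (ball c r) w)
    (hκ : 0 ≤ κ) (hx : supConvArgmax (closedBall c r) κ u x ⊆ ball c r)
    (hy : supConvArgmax (closedBall c r) κ w y ⊆ ball c r) (hxc : ‖x - c‖ ≤ r / 2)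
    (hxy : ‖x - y‖ ≤ r / 4) (hne : x ≠ y) :
    ¬ IsLocalMax (doubled (concavePenalty ((Module.finrank ℝ F + 14) * (M / r)) r) (4 * M / r ^ 2) c
      (supConv (closedBall c r) κ u) (supConv (closedBall c r) κ w)) (x, y) := by
  intro hmax
  set n : ℝ := (Module.finrank ℝ F : ℝ)
  have hM₀ : 0 < M := hr.trans_le hM
  have hn : 0 ≤ n := Nat.cast_nonneg _
  rw [← interior_closedBall c hr.ne'] at hu hw hx hy
  have hq : 1 ≤ M / r := (one_le_div hr).2 hM
  have hslope : 7 * (M / r) ≤ |(n + 14) * (M / r) * (1 - 2 * ‖x - y‖ / r)| := by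
    have hhalf : 1 / 2 ≤ 1 - 2 * ‖x - y‖ / r := by
      have : 2 * ‖x - y‖ / r ≤ 1 / 2 := by rw [div_le_iff₀ hr]; linarith
      linarith
    calc 7 * (M / r) = 14 * (M / r) * (1 / 2) := by ring
      _ ≤ (n + 14) * (M / r) * (1 - 2 * ‖x - y‖ / r) := by gcongr; linarith
      _ ≤ _ := le_abs_self _
  have hlocal : 2 * (4 * M / r ^ 2) * ‖x - c‖ ≤ 4 * (M / r) := by
    calc 2 * (4 * M / r ^ 2) * ‖x - c‖ ≤ 2 * (4 * M / r ^ 2) * (r / 2) := by gcongr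
      _ = 4 * (M / r) := by field_simp
  have hle := hu.le_of_isLocalMax_doubled_supConv hw (isCompact_closedBall c r)
    (nonempty_closedBall.2 hr.le) hucont hwcont hκ (by positivity) (contDiff_concavePenalty _ r) hne
    hx hy (by rw [deriv_concavePenalty]; linarith) hmax
  have hlap : 4 * -(2 * ((n + 14) * (M / r)) / r) + 2 * n * (4 * M / r ^ 2)
      = -(112 * (M / r / r)) := by ring
  have hqr : 1 ≤ M / r / r := (one_le_div hr).2 (hr₁.trans hq)
  rw [deriv_deriv_concavePenalty, hlap] at hle
  linarith

theorem sub_le_mul_norm_sub (hr : 0 < r) (hr₁ : r ≤ 1) (hM : r ≤ M)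
    (hcont : ContinuousOn u (closedBall c r)) (hbound : ∀ x ∈ closedBall c r, u x ∈ Icc 0 M)
    (hu : IsViscSubsolution 2 (-1) (ball c r) u)
    (hu_neg : IsViscSubsolution 2 (-1) (ball c r) fun x => -u x) (hy : ‖c - y‖ ≤ r / 4) :
    u c - u y ≤ (Module.finrank ℝ F + 14) * (M / r) * ‖c - y‖ := by
  by_contra! hlt
  set L : ℝ := (Module.finrank ℝ F + 14) * (M / r)
  set K : Set F := closedBall c r
  have hK : IsCompact K := isCompact_closedBall c r
  have hne : K.Nonempty := nonempty_closedBall.2 hr.le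
  set ω : ℝ := u c - u y - L * ‖c - y‖
  have hω : 0 < ω := sub_pos.2 hlt
  have hM₀ : 0 < M := hr.trans_le hM
  have hL : 0 ≤ L := by positivity
  obtain ⟨κ, hκ, hnear, hnear_neg, hdiag⟩ :=
    exists_supConv_add_supConv_neg_lt hK hcont (show 0 < r / 8 by positivity) hω
  set U : F → ℝ := supConv K κ u
  set W : F → ℝ := supConv K κ fun x => -u x
  have hUW (x x' : F) : U x + W x' ≤ M := by
    linarith [supConv_le hne hκ (fun z hz => (hbound z hz).2) x,
      supConv_le hne hκ (fun z hz => neg_nonpos.2 (hbound z hz).1) x']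
  have hpenalty : M ≤ concavePenalty L r (r / 4) :=
    le_concavePenalty_div_four (Nat.cast_nonneg _) hM₀.le hr
  have hstart : ω ≤ doubled (concavePenalty L r) (4 * M / r ^ 2) c U W (c, y) := by
    have hyK : y ∈ K := mem_closedBall_iff_norm'.2 (by linarith)
    have hsq : 0 ≤ L * (‖c - y‖ ^ 2 / r) := by positivity
    simp only [doubled, concavePenalty, sub_self, norm_zero]
    linarith [le_supConv (κ := κ) hK hcont (mem_closedBall_self hr.le),
      le_supConv (κ := κ) hK hcont.fun_neg hyK]
  obtain ⟨x₀, y₀, hx₀, hxy₀, hne₀, hmax⟩ := exists_isLocalMax_doubled (s := r / 2)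
    (continuous_supConv hK hcont) (continuous_supConv hK hcont.fun_neg)
    (contDiff_concavePenalty L r).continuous hUW
    (fun τ hτ => concavePenalty_nonneg hL hr ⟨hτ.1, by linarith [hτ.2]⟩) hpenalty (by positivity)
    (by positivity) (by field_simp; norm_num) hy (hω.trans_le hstart)
    fun x hx => (hdiag x (closedBall_subset_closedBall (by linarith) hx)).trans_le hstart
  have hdx₀ : dist x₀ c < r / 2 := hx₀
  have hdy₀ : dist y₀ c < 3 * r / 4 := by
    linarith [dist_triangle_left y₀ c x₀, dist_eq_norm x₀ y₀]
  exact not_isLocalMax_doubled_supConv_concavePenalty hr hr₁ hM hcont hcont.fun_neg hu hu_neg hκ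
    ((hnear x₀ (mem_closedBall.2 (by linarith))).trans (closedBall_subset_ball' (by linarith)))
    ((hnear_neg y₀ (mem_closedBall.2 (by linarith))).trans (closedBall_subset_ball' (by linarith)))
    (by linarith [dist_eq_norm x₀ c]) hxy₀.le hne₀ hmax

end IsViscSubsolution

end Lipschitz

/-! ### The radial barrier -/

section Barrier

theorem deriv_inv_add_pow (N : ℕ) (a : ℝ) :
    deriv (fun s : ℝ => (s + a)⁻¹ ^ N) = fun s : ℝ => -(N * (s + a)⁻¹ ^ (N + 1)) := by
  have hzpow (k : ℕ) (s : ℝ) : s⁻¹ ^ k = s ^ (-(k : ℤ)) := by rw [zpow_neg, zpow_natCast, inv_pow]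
  funext s
  simp only [hzpow]
  rw [deriv_comp_add_const (fun s : ℝ => s ^ (-(N : ℤ))), deriv_zpow]
  push_cast
  rw [neg_mul, neg_add']

theorem deriv_deriv_inv_add_pow (N : ℕ) (a s : ℝ) :
    deriv (deriv fun s : ℝ => (s + a)⁻¹ ^ N) s = N * (N + 1) * (s + a)⁻¹ ^ (N + 2) := by
  rw [deriv_inv_add_pow, deriv.fun_neg, deriv_const_mul_field, deriv_inv_add_pow]
  push_cast
  ring

theorem half_le_sq_mul_inv_sq_add_sq {t z : ℝ} (ht : 0 < t) (htz : t ≤ z) :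
    1 / 2 ≤ z ^ 2 * (z ^ 2 + t ^ 2)⁻¹ := by
  rw [← div_eq_mul_inv, le_div_iff₀ (by positivity)]
  nlinarith

theorem one_le_mul_inv_sq_add_sq_pow {A R t z : ℝ} {N : ℕ} (ht : 0 < t) (htz : t ≤ z)
    (hzR : z ≤ R) (hA : 2 ^ (N + 1) * R ^ (2 * N + 1) ≤ A) :
    1 ≤ A * (z * (z ^ 2 + t ^ 2)⁻¹ ^ (N + 1)) := by
  have hz : 0 < z := ht.trans_le htz
  calc (1 : ℝ) ≤ (2 * (z ^ 2 * (z ^ 2 + t ^ 2)⁻¹)) ^ (N + 1) :=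
        one_le_pow₀ (by linarith [half_le_sq_mul_inv_sq_add_sq ht htz])
    _ = 2 ^ (N + 1) * z ^ (2 * N + 1) * (z * (z ^ 2 + t ^ 2)⁻¹ ^ (N + 1)) := by
      rw [mul_pow, mul_pow, ← pow_mul]
      ring
    _ ≤ A * (z * (z ^ 2 + t ^ 2)⁻¹ ^ (N + 1)) := by
      gcongr
      exact le_trans (by gcongr) hA

theorem inv_pow_le_inv_sq_add_sq_pow_sub {t z ρ : ℝ} {N : ℕ} (hN : N ≠ 0) (ht : 0 < t)
    (htρ : t ≤ ρ) (hz : 0 ≤ z) (hzρ : z ≤ ρ) :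
    ((2 * ρ) ^ (2 * N))⁻¹ ≤ (z ^ 2 + t ^ 2)⁻¹ ^ N - ((2 * ρ) ^ 2 + t ^ 2)⁻¹ ^ N := by
  have hρ : 0 < ρ := ht.trans_le htρ
  have hinner : 2 * ((2 * ρ) ^ 2)⁻¹ ≤ (z ^ 2 + t ^ 2)⁻¹ := by
    calc 2 * ((2 * ρ) ^ 2)⁻¹ = (ρ ^ 2 + ρ ^ 2)⁻¹ := by field_simp; norm_num
      _ ≤ (z ^ 2 + t ^ 2)⁻¹ := by gcongr
  have houter : ((2 * ρ) ^ 2 + t ^ 2)⁻¹ ≤ ((2 * ρ) ^ 2)⁻¹ :=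
    inv_anti₀ (by positivity) (le_add_of_nonneg_right (sq_nonneg t))
  have htwo : (2 : ℝ) ≤ 2 ^ N := le_self_pow₀ one_le_two hN
  rw [le_sub_iff_add_le, pow_mul, ← inv_pow]
  calc ((2 * ρ) ^ 2)⁻¹ ^ N + ((2 * ρ) ^ 2 + t ^ 2)⁻¹ ^ N
      ≤ ((2 * ρ) ^ 2)⁻¹ ^ N + ((2 * ρ) ^ 2)⁻¹ ^ N := by gcongr
    _ = 2 * ((2 * ρ) ^ 2)⁻¹ ^ N := by ring
    _ ≤ 2 ^ N * ((2 * ρ) ^ 2)⁻¹ ^ N := by gcongr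
    _ = (2 * ((2 * ρ) ^ 2)⁻¹) ^ N := (mul_pow ..).symm
    _ ≤ (z ^ 2 + t ^ 2)⁻¹ ^ N := by gcongr

variable {F : Type*} [NormedAddCommGroup F] {N : ℕ} {t : ℝ} {c x : F}

/-- The regularized fundamental solution `(‖x - c‖² + t²)⁻ᴺ`. For `N` larger than the dimension it
is subharmonic outside the ball of radius `t`, which makes it a barrier on annuli around `c`. -/
def radialBarrier (N : ℕ) (t : ℝ) (c x : F) : ℝ := (‖x - c‖ ^ 2 + t ^ 2)⁻¹ ^ N

theorem mul_radialBarrier_of_mem_sphere (m : ℝ) (N : ℕ) (ht : 0 < t) (hx : x ∈ sphere c t) :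
    m * (2 * t ^ 2) ^ N * radialBarrier N t c x = m := by
  rw [radialBarrier, mem_sphere_iff_norm.1 hx, ← two_mul, mul_assoc, ← mul_pow,
    mul_inv_cancel₀ (by positivity), one_pow, mul_one]

variable [InnerProductSpace ℝ F]

theorem contDiff_radialBarrier (N : ℕ) (ht : 0 < t) (c : F) :
    ContDiff ℝ 2 (radialBarrier N t c) :=
  (((contDiff_norm_sub_sq c).add contDiff_const).inv fun x => by positivity).pow N

theorem norm_fderiv_radialBarrier (N : ℕ) (ht : 0 < t) (c x : F) :
    ‖fderiv ℝ (radialBarrier N t c) x‖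
      = 2 * N * (‖x - c‖ * (‖x - c‖ ^ 2 + t ^ 2)⁻¹ ^ (N + 1)) := by
  have hg : HasDerivAt (fun s : ℝ => (s + t ^ 2)⁻¹ ^ N) (-(N * (‖x - c‖ ^ 2 + t ^ 2)⁻¹ ^ (N + 1)))
      (‖x - c‖ ^ 2) := by
    rw [← congrFun (deriv_inv_add_pow N (t ^ 2))]
    exact (((differentiableAt_id.add_const _).inv (by positivity)).pow N).hasDerivAt
  have hsq := ((contDiff_norm_sub_sq c).differentiable two_ne_zero x).hasFDerivAt
  have hcomp := (hg.comp_hasFDerivAt x hsq).fderiv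
  rw [Function.comp_def] at hcomp
  unfold radialBarrier
  rw [hcomp, norm_smul, norm_fderiv_norm_sub_sq, norm_neg, Real.norm_of_nonneg (by positivity)]
  ring

theorem two_le_norm_fderiv_smul_radialBarrier (hN : N ≠ 0) (ht : 0 < t) {A : ℝ} (hA : 0 ≤ A)
    (hx : 1 ≤ A * (‖x - c‖ * (‖x - c‖ ^ 2 + t ^ 2)⁻¹ ^ (N + 1))) :
    2 ≤ ‖fderiv ℝ ((-A) • radialBarrier N t c) x‖ := by
  have hN₁ : (1 : ℝ) ≤ N := Nat.one_le_cast.2 (Nat.one_le_iff_ne_zero.2 hN)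
  rw [fderiv_const_smul ((contDiff_radialBarrier N ht c).differentiable two_ne_zero x), norm_smul,
    norm_neg, Real.norm_of_nonneg hA, norm_fderiv_radialBarrier N ht]
  nlinarith

variable [FiniteDimensional ℝ F]

theorem laplacian_radialBarrier (N : ℕ) (ht : 0 < t) (c x : F) :
    Δ (radialBarrier N t c) x
      = 4 * ‖x - c‖ ^ 2 * (N * (N + 1) * (‖x - c‖ ^ 2 + t ^ 2)⁻¹ ^ (N + 2))
        - 2 * Module.finrank ℝ F * (N * (‖x - c‖ ^ 2 + t ^ 2)⁻¹ ^ (N + 1)) := by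
  have hg : ContDiffAt ℝ 2 (fun s : ℝ => (s + t ^ 2)⁻¹ ^ N) (‖x - c‖ ^ 2) :=
    ((contDiffAt_id.add contDiffAt_const).inv (by simp only [id]; positivity)).pow N
  have hlap := laplacian_comp_norm_sub_sq hg
  rw [deriv_deriv_inv_add_pow, deriv_inv_add_pow, mul_neg, ← sub_eq_add_neg] at hlap
  exact hlap

theorem le_laplacian_radialBarrier (hN : Module.finrank ℝ F ≤ N) (ht : 0 < t)
    (hx : t ≤ ‖x - c‖) :
    2 * N * (‖x - c‖ ^ 2 + t ^ 2)⁻¹ ^ (N + 1) ≤ Δ (radialBarrier N t c) x := by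
  rw [laplacian_radialBarrier N ht]
  set Q : ℝ := (‖x - c‖ ^ 2 + t ^ 2)⁻¹
  have hdim : (Module.finrank ℝ F : ℝ) ≤ N := by exact_mod_cast hN
  have hQ : 1 / 2 ≤ ‖x - c‖ ^ 2 * Q := half_le_sq_mul_inv_sq_add_sq ht hx
  calc 2 * N * Q ^ (N + 1) = N * Q ^ (N + 1) * 2 := by ring
    _ ≤ N * Q ^ (N + 1) * (4 * (N + 1) * (1 / 2) - 2 * Module.finrank ℝ F) := by
      gcongr
      linarith
    _ ≤ N * Q ^ (N + 1) * (4 * (N + 1) * (‖x - c‖ ^ 2 * Q) - 2 * Module.finrank ℝ F) := by gcongr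
    _ = _ := by ring

theorem isCompact_setOf_norm_sub_mem_Icc (c : F) (t R : ℝ) :
    IsCompact {x : F | ‖x - c‖ ∈ Icc t R} :=
  (isCompact_closedBall c R).of_isClosed_subset
    (isClosed_Icc.preimage (f := fun x => ‖x - c‖) (by fun_prop))
    fun _ hx => mem_closedBall_iff_norm.2 hx.2

theorem laplacian_smul_radialBarrier_lt (hN : Module.finrank ℝ F < N) (ht : 0 < t)
    (htx : t ≤ ‖x - c‖) (hx₁ : ‖x - c‖ ≤ 1) {A : ℝ} (hA : 0 ≤ A)
    (hx : 1 ≤ A * (‖x - c‖ * (‖x - c‖ ^ 2 + t ^ 2)⁻¹ ^ (N + 1))) :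
    Δ ((-A) • radialBarrier N t c) x < -1 := by
  have hN₁ : (1 : ℝ) ≤ N := by exact_mod_cast (Nat.zero_le _).trans_lt hN
  rw [InnerProductSpace.laplacian_smul _ (contDiff_radialBarrier N ht c).contDiffAt, smul_eq_mul,
    neg_mul, neg_lt_neg_iff]
  set Q : ℝ := (‖x - c‖ ^ 2 + t ^ 2)⁻¹
  calc (1 : ℝ) < 2 * N * 1 := by linarith
    _ ≤ 2 * N * (A * (1 * Q ^ (N + 1))) := by
      gcongr
      exact hx.trans (by gcongr)
    _ = A * (2 * N * Q ^ (N + 1)) := by ring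
    _ ≤ A * Δ (radialBarrier N t c) x := by gcongr; exact le_laplacian_radialBarrier hN.le ht htx

namespace IsViscSubsolution

variable {R m : ℝ} {v : F → ℝ}

theorem mul_radialBarrier_sub_le (hN : Module.finrank ℝ F < N) (ht : 0 < t) (hR : R ≤ 1)
    (hv : IsViscSubsolution 2 (-1) (ball c R) fun x => -v x)
    (hcont : ContinuousOn v (closedBall c R)) (hnonneg : ∀ x ∈ closedBall c R, 0 ≤ v x)
    (hm : ∀ x ∈ sphere c t, m ≤ v x)
    (hA : 2 ^ (N + 1) * R ^ (2 * N + 1) ≤ m * (2 * t ^ 2) ^ N) (hx : ‖x - c‖ ∈ Icc t R) :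
    m * (2 * t ^ 2) ^ N * (radialBarrier N t c x - (R ^ 2 + t ^ 2)⁻¹ ^ N) ≤ v x := by
  set A : ℝ := m * (2 * t ^ 2) ^ N
  set wR : ℝ := (R ^ 2 + t ^ 2)⁻¹ ^ N
  have hR₀ : 0 < R := ht.trans_le (hx.1.trans hx.2)
  have hA₀ : 0 < A := lt_of_lt_of_le (by positivity) hA
  set w : F → ℝ := radialBarrier N t c
  have hw : ContDiff ℝ 2 w := contDiff_radialBarrier N ht c
  set Ω : Set F := {y | ‖y - c‖ ∈ Ioo t R}
  have hΩ : IsOpen Ω := isOpen_Ioo.preimage (f := fun y => ‖y - c‖) (by fun_prop)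
  have hlarge (y : F) (hy : y ∈ Ω) :
      1 ≤ A * (‖y - c‖ * (‖y - c‖ ^ 2 + t ^ 2)⁻¹ ^ (N + 1)) :=
    one_le_mul_inv_sq_add_sq_pow ht hy.1.le hy.2.le hA
  have hbdry : ∀ y ∈ {y | ‖y - c‖ ∈ Icc t R} \ Ω, -v y - ((-A) • w) y ≤ A * wR := by
    rintro y ⟨hyK, hyΩ⟩
    have hyR : y ∈ closedBall c R := mem_closedBall_iff_norm.2 hyK.2
    rw [Pi.smul_apply, smul_eq_mul]
    rcases hyK.1.eq_or_lt with hyt | hyt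
    · have hyt' : y ∈ sphere c t := mem_sphere_iff_norm.2 hyt.symm
      have hwR : 0 ≤ A * wR := by positivity
      linarith [hm y hyt', mul_radialBarrier_of_mem_sphere m N ht hyt']
    · have hyR' : ‖y - c‖ = R := le_antisymm hyK.2 (not_lt.1 fun h => hyΩ ⟨hyt, h⟩)
      have hwy : w y = wR := by simp only [w, wR, radialBarrier, hyR']
      linarith [hnonneg y hyR, congrArg (A * ·) hwy]
  have hle := (hv.mono_set fun y hy => mem_ball_iff_norm.2 hy.2).sub_le_of_forall_laplacian_lt hΩ
    (isCompact_setOf_norm_sub_mem_Icc c t R) (fun y hy => Ioo_subset_Icc_self hy)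
    (hcont.fun_neg.mono fun y hy => mem_closedBall_iff_norm.2 hy.2) (hw.const_smul (-A))
    (fun y hy => two_le_norm_fderiv_smul_radialBarrier (by lia) ht hA₀.le (hlarge y hy))
    (fun y hy => laplacian_smul_radialBarrier_lt hN ht hy.1.le (hy.2.le.trans hR) hA₀.le
      (hlarge y hy)) hbdry x hx
  rw [smul_eq_mul] at hle
  linarith

end IsViscSubsolution

end Barrier

/-! ### The Harnack inequality -/

section Harnack

theorem le_two_pow_mul_of_isMaxOn {X : Type*} [PseudoMetricSpace X] {v : X → ℝ} {ρ : ℝ} {k : ℕ}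
    {x₀ y z : X} (hmax : IsMaxOn (fun x => v x * (ρ - dist x y) ^ k) (closedBall y ρ) x₀)
    (hnonneg : ∀ x ∈ closedBall y ρ, 0 ≤ v x) (hx₀ : dist x₀ y < ρ)
    (hz : dist z x₀ ≤ (ρ - dist x₀ y) / 2) : v z ≤ 2 ^ k * v x₀ := by
  set d : ℝ := ρ - dist x₀ y
  have hd : 0 < d := sub_pos.2 hx₀
  have hzy : d / 2 ≤ ρ - dist z y := by linarith [dist_triangle z x₀ y]
  have hzρ : z ∈ closedBall y ρ := mem_closedBall.2 (by linarith)
  have hvz : 0 ≤ v z := hnonneg z hzρ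
  refine le_of_mul_le_mul_right ?_ (show 0 < (d / 2) ^ k by positivity)
  calc v z * (d / 2) ^ k ≤ v z * (ρ - dist z y) ^ k := by gcongr
    _ ≤ v x₀ * d ^ k := hmax hzρ
    _ = 2 ^ k * v x₀ * (d / 2) ^ k := by rw [div_pow]; field_simp

theorem le_pow_mul_of_forall_dist_le {V : Type*} [SeminormedAddCommGroup V] [NormedSpace ℝ V]
    {s : Set V} (hs : Convex ℝ s) {g : V → ℝ} {C h : ℝ} (hC : 0 ≤ C)
    (hg : ∀ x ∈ s, ∀ y ∈ s, dist x y ≤ h → g x ≤ C * g y) (k : ℕ) :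
    ∀ x ∈ s, ∀ y ∈ s, dist x y ≤ (k + 1 : ℕ) * h → g x ≤ C ^ (k + 1) * g y := by
  induction k with
  | zero => simpa using hg
  | succ k ih =>
    intro x hx y hy hxy
    set τ : ℝ := ((k + 2 : ℕ) : ℝ)⁻¹
    set z : V := AffineMap.lineMap y x τ
    have hτ₀ : 0 ≤ τ := by positivity
    have hτ₁ : τ ≤ 1 := Nat.cast_inv_le_one _
    have hτ : τ * (k + 2 : ℕ) = 1 := inv_mul_cancel₀ (by positivity)
    push_cast at hxy hτ
    have hz : z ∈ s := hs.lineMap_mem hy hx ⟨hτ₀, hτ₁⟩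
    have hzy : dist z y ≤ h := by
      rw [dist_lineMap_left, Real.norm_of_nonneg hτ₀, dist_comm]
      calc τ * dist x y ≤ τ * ((k + 1 + 1) * h) := by gcongr
        _ = h := by linear_combination h * hτ
    have hxz : dist x z ≤ (k + 1 : ℕ) * h := by
      rw [dist_comm, dist_lineMap_right, Real.norm_of_nonneg (sub_nonneg.2 hτ₁), dist_comm]
      calc (1 - τ) * dist x y ≤ (1 - τ) * ((k + 1 + 1) * h) := by gcongr
        _ = (k + 1 : ℕ) * h := by push_cast; linear_combination -h * hτ
    calc g x ≤ C ^ (k + 1) * g z := ih x hx z hz hxz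
      _ ≤ C ^ (k + 1) * (C * g y) := by gcongr; exact hg z hz y hy hzy
      _ = C ^ (k + 1 + 1) * g y := by ring

variable {F : Type*} [NormedAddCommGroup F] [InnerProductSpace ℝ F] [FiniteDimensional ℝ F]

/-- A continuous nonnegative function with `|Δv| ≤ 1` in the viscosity sense wherever `|∇v| ≥ 2`.
This is all that the Harnack inequality uses about a solution of `|∇v + e|^μ Δv = f`. -/
structure IsNonnegViscSolution (Ω : Set F) (v : F → ℝ) : Prop where
  continuousOn : ContinuousOn v Ω
  nonneg : ∀ x ∈ Ω, 0 ≤ v x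
  isViscSubsolution : IsViscSubsolution 2 (-1) Ω v
  isViscSubsolution_neg : IsViscSubsolution 2 (-1) Ω fun x => -v x

namespace IsNonnegViscSolution

variable {Ω : Set F} {v : F → ℝ} {c x x₀ y z : F} {r t ρ θ : ℝ} {N : ℕ}

theorem half_le_of_forall_le_mul (hv : IsNonnegViscSolution Ω v) (hr : 0 < r) (hr₁ : r ≤ 1)
    (hΩ : closedBall c r ⊆ Ω) (hrc : r ≤ v c) {A : ℝ} (hA : 1 ≤ A)
    (hbound : ∀ x ∈ closedBall c r, v x ≤ A * v c)
    (hz : 2 * A * (Module.finrank ℝ F + 14) * ‖c - z‖ ≤ r) : v c / 2 ≤ v z := by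
  have hvc : 0 < v c := hr.trans_le hrc
  have hball : ball c r ⊆ Ω := ball_subset_closedBall.trans hΩ
  have hnear : 4 * ‖c - z‖ ≤ r := by
    refine le_trans ?_ hz
    gcongr
    nlinarith [Nat.cast_nonneg (α := ℝ) (Module.finrank ℝ F)]
  have hlip := (hv.isViscSubsolution.mono_set hball).sub_le_mul_norm_sub hr hr₁
    (show r ≤ A * v c by nlinarith) (hv.continuousOn.mono hΩ)
    (fun x hx => ⟨hv.nonneg x (hΩ hx), hbound x hx⟩) (hv.isViscSubsolution_neg.mono_set hball)
    (show ‖c - z‖ ≤ r / 4 by linarith)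
  have hdrop : (Module.finrank ℝ F + 14) * (A * v c / r) * ‖c - z‖ ≤ v c / 2 := by
    calc (Module.finrank ℝ F + 14) * (A * v c / r) * ‖c - z‖
        = 2 * A * (Module.finrank ℝ F + 14) * ‖c - z‖ * (v c / (2 * r)) := by field_simp
      _ ≤ r * (v c / (2 * r)) := by gcongr
      _ = v c / 2 := by field_simp
  linarith

theorem half_le_of_isMaxOn (hv : IsNonnegViscSolution Ω v) (hρ₁ : 2 * ρ ≤ 1)
    (hΩ : closedBall y ρ ⊆ Ω)
    (hmax : IsMaxOn (fun x => v x * (ρ - dist x y) ^ (2 * N)) (closedBall y ρ) x₀)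
    (hx₀ : dist x₀ y < ρ) (hlarge : ρ - dist x₀ y ≤ v x₀)
    (hθ : 4 * 2 ^ (2 * N) * (Module.finrank ℝ F + 14) * θ ≤ 1)
    (hz : z ∈ closedBall x₀ (θ * (ρ - dist x₀ y))) : v x₀ / 2 ≤ v z := by
  have hdist : 0 ≤ dist x₀ y := dist_nonneg
  set d : ℝ := ρ - dist x₀ y
  have hd : 0 < d := sub_pos.2 hx₀
  have hball : closedBall x₀ (d / 2) ⊆ Ω :=
    (closedBall_subset_closedBall' (by linarith)).trans hΩ
  refine hv.half_le_of_forall_le_mul (half_pos hd) (by linarith) hball (by linarith)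
    (one_le_pow₀ one_le_two)
    (fun x hx => le_two_pow_mul_of_isMaxOn hmax (fun x hx => hv.nonneg x (hΩ hx)) hx₀ hx) ?_
  calc 2 * 2 ^ (2 * N) * (Module.finrank ℝ F + 14) * ‖x₀ - z‖
      ≤ 2 * 2 ^ (2 * N) * (Module.finrank ℝ F + 14) * (θ * d) := by
        gcongr
        exact mem_closedBall_iff_norm'.1 hz
    _ = 4 * 2 ^ (2 * N) * (Module.finrank ℝ F + 14) * θ * (d / 2) := by ring
    _ ≤ d / 2 := mul_le_of_le_one_left (half_pos hd).le hθ

theorem mul_pow_le_of_forall_mem_closedBall (hv : IsNonnegViscSolution Ω v)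
    (hN : Module.finrank ℝ F < N) (ht : 0 < t) (htρ : t ≤ ρ) (hρ₁ : 2 * ρ ≤ 1)
    (hΩ : closedBall c (2 * ρ) ⊆ Ω) {m : ℝ} (hm₀ : 0 ≤ m) (hm : ∀ x ∈ closedBall c t, m ≤ v x)
    (hy : ‖y - c‖ ≤ ρ) : m * t ^ (2 * N) ≤ 4 * (2 * ρ) ^ (2 * N) * (v y + ρ) := by
  have hρ₀ : 0 < ρ := ht.trans_le htρ
  have hvy : 0 ≤ v y := hv.nonneg y (hΩ (mem_closedBall_iff_norm.2 (by linarith)))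
  have hAt : m * (2 * t ^ 2) ^ N = 2 ^ N * (m * t ^ (2 * N)) := by rw [mul_pow, pow_mul]; ring
  rcases le_total ‖y - c‖ t with hyt | hyt
  · calc m * t ^ (2 * N) ≤ v y * (2 * ρ) ^ (2 * N) := by
          gcongr
          · exact hm y (mem_closedBall_iff_norm.2 hyt)
          · linarith
      _ ≤ (4 * (v y + ρ)) * (2 * ρ) ^ (2 * N) := by gcongr; linarith
      _ = _ := by ring
  rcases le_total (2 ^ (N + 1) * (2 * ρ) ^ (2 * N + 1)) (m * (2 * t ^ 2) ^ N) with hA | hA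
  · have hle := (hv.isViscSubsolution_neg.mono_set
      (ball_subset_closedBall.trans hΩ)).mul_radialBarrier_sub_le hN ht hρ₁
      (hv.continuousOn.mono hΩ) (fun x hx => hv.nonneg x (hΩ hx))
      (fun x hx => hm x (sphere_subset_closedBall hx)) hA ⟨hyt, by linarith⟩
    have hgap : ((2 * ρ) ^ (2 * N))⁻¹ ≤ radialBarrier N t c y - ((2 * ρ) ^ 2 + t ^ 2)⁻¹ ^ N :=
      inv_pow_le_inv_sq_add_sq_pow_sub (by lia) ht htρ (norm_nonneg _) hy
    have hmt : m * t ^ (2 * N) ≤ m * (2 * t ^ 2) ^ N :=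
      hAt ▸ le_mul_of_one_le_left (by positivity) (one_le_pow₀ one_le_two)
    calc m * t ^ (2 * N)
        = (2 * ρ) ^ (2 * N) * (m * t ^ (2 * N) * ((2 * ρ) ^ (2 * N))⁻¹) := by field_simp
      _ ≤ (2 * ρ) ^ (2 * N) * v y := by
        gcongr
        exact le_trans (by gcongr) hle
      _ ≤ (2 * ρ) ^ (2 * N) * (4 * (v y + ρ)) := by gcongr; linarith
      _ = _ := by ring
  · have hsmall : 2 ^ N * (m * t ^ (2 * N)) ≤ 2 ^ N * (4 * (2 * ρ) ^ (2 * N) * ρ) := by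
      rw [← hAt]
      exact hA.trans_eq (by ring)
    calc m * t ^ (2 * N) ≤ 4 * (2 * ρ) ^ (2 * N) * ρ := le_of_mul_le_mul_left hsmall (by positivity)
      _ ≤ 4 * (2 * ρ) ^ (2 * N) * (v y + ρ) := by gcongr; linarith

theorem mul_pow_le_of_isMaxOn (hv : IsNonnegViscSolution Ω v) (hN : Module.finrank ℝ F < N)
    (hρ : 0 < ρ) (hρ₁ : 2 * ρ ≤ 1) (hΩ : closedBall y (3 * ρ) ⊆ Ω) (hx₀ : x₀ ∈ closedBall y ρ)
    (hmax : IsMaxOn (fun x => v x * (ρ - dist x y) ^ (2 * N)) (closedBall y ρ) x₀) (hθ : 0 < θ)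
    (hθN : 4 * 2 ^ (2 * N) * (Module.finrank ℝ F + 14) * θ ≤ 1) :
    v x₀ * (θ * (ρ - dist x₀ y)) ^ (2 * N) ≤ 8 * (2 * ρ) ^ (2 * N) * (v y + ρ) := by
  rw [mem_closedBall] at hx₀
  have hdist : 0 ≤ dist x₀ y := dist_nonneg
  have hvy : 0 ≤ v y := hv.nonneg y (hΩ (mem_closedBall_self (by positivity)))
  have hvx₀ : 0 ≤ v x₀ := hv.nonneg x₀ (hΩ (mem_closedBall.2 (by linarith)))
  have hθ₁ : θ ≤ 1 := by
    refine le_trans (le_mul_of_one_le_left hθ.le ?_) hθN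
    have hpow : (1 : ℝ) ≤ 2 ^ (2 * N) := one_le_pow₀ one_le_two
    nlinarith [Nat.cast_nonneg (α := ℝ) (Module.finrank ℝ F)]
  rcases hx₀.eq_or_lt with hx₀ρ | hx₀ρ
  · rw [hx₀ρ, sub_self, mul_zero, zero_pow (by lia), mul_zero]
    positivity
  have hθd : θ * (ρ - dist x₀ y) ≤ ρ := by nlinarith
  rcases le_total (v x₀) (ρ - dist x₀ y) with hsmall | hlarge
  · calc v x₀ * (θ * (ρ - dist x₀ y)) ^ (2 * N) ≤ ρ * (2 * ρ) ^ (2 * N) := by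
          have hθd₀ : 0 ≤ θ * (ρ - dist x₀ y) := mul_nonneg hθ.le (by linarith)
          exact mul_le_mul (by linarith) (pow_le_pow_left₀ hθd₀ (by linarith) _) (by positivity)
            hρ.le
      _ ≤ 8 * (v y + ρ) * (2 * ρ) ^ (2 * N) := by gcongr; linarith
      _ = 8 * (2 * ρ) ^ (2 * N) * (v y + ρ) := by ring
  · have hhalf : ∀ z ∈ closedBall x₀ (θ * (ρ - dist x₀ y)), v x₀ / 2 ≤ v z := fun z hz =>
      hv.half_le_of_isMaxOn hρ₁ ((closedBall_subset_closedBall (by linarith)).trans hΩ) hmax hx₀ρ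
        hlarge hθN hz
    have hle := hv.mul_pow_le_of_forall_mem_closedBall hN (mul_pos hθ (sub_pos.2 hx₀ρ)) hθd hρ₁
      ((closedBall_subset_closedBall' (by linarith)).trans hΩ) (by positivity) hhalf
      (dist_eq_norm y x₀ ▸ dist_comm x₀ y ▸ hx₀)
    linarith

theorem mul_pow_le_of_dist_le (hv : IsNonnegViscSolution Ω v) (hN : Module.finrank ℝ F < N)
    (hρ : 0 < ρ) (hρ₁ : 2 * ρ ≤ 1) (hΩ : closedBall y (3 * ρ) ⊆ Ω) (hθ : 0 < θ)
    (hθN : 4 * 2 ^ (2 * N) * (Module.finrank ℝ F + 14) * θ ≤ 1) (hx : dist x y ≤ ρ / 2) :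
    v x * θ ^ (2 * N) ≤ 8 * 4 ^ (2 * N) * (v y + ρ) := by
  have hρΩ : closedBall y ρ ⊆ Ω := (closedBall_subset_closedBall (by linarith)).trans hΩ
  have hxρ : x ∈ closedBall y ρ := mem_closedBall.2 (by linarith)
  have hvx : 0 ≤ v x := hv.nonneg x (hρΩ hxρ)
  have hcont : ContinuousOn (fun x => v x * (ρ - dist x y) ^ (2 * N)) (closedBall y ρ) :=
    (hv.continuousOn.mono hρΩ).mul (by fun_prop)
  obtain ⟨x₀, hx₀, hmax⟩ := (isCompact_closedBall y ρ).exists_isMaxOn ⟨x, hxρ⟩ hcont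
  refine le_of_mul_le_mul_right ?_ (show 0 < (ρ / 2) ^ (2 * N) by positivity)
  calc v x * θ ^ (2 * N) * (ρ / 2) ^ (2 * N)
      ≤ v x * θ ^ (2 * N) * (ρ - dist x y) ^ (2 * N) := by gcongr; linarith
    _ = θ ^ (2 * N) * (v x * (ρ - dist x y) ^ (2 * N)) := by ring
    _ ≤ θ ^ (2 * N) * (v x₀ * (ρ - dist x₀ y) ^ (2 * N)) :=
      mul_le_mul_of_nonneg_left (hmax hxρ) (by positivity)
    _ = v x₀ * (θ * (ρ - dist x₀ y)) ^ (2 * N) := by rw [mul_pow]; ring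
    _ ≤ 8 * (2 * ρ) ^ (2 * N) * (v y + ρ) :=
      hv.mul_pow_le_of_isMaxOn hN hρ hρ₁ hΩ hx₀ hmax hθ hθN
    _ = 8 * 4 ^ (2 * N) * (v y + ρ) * (ρ / 2) ^ (2 * N) := by
      rw [show 2 * ρ = 4 * (ρ / 2) by ring, mul_pow]
      ring

variable (F) in
theorem exists_harnack_of_dist_le :
    ∃ C : ℝ, 1 ≤ C ∧ ∀ {Ω : Set F} {v : F → ℝ} {x y : F} {ρ : ℝ}, IsNonnegViscSolution Ω v →
      0 < ρ → 2 * ρ ≤ 1 → closedBall y (3 * ρ) ⊆ Ω → dist x y ≤ ρ / 2 →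
      v x ≤ C * (v y + ρ) := by
  set N : ℕ := Module.finrank ℝ F + 1
  set B : ℝ := 4 * 2 ^ (2 * N) * (Module.finrank ℝ F + 14)
  have hB : 0 < B := by positivity
  have hB₁ : 1 ≤ B := by
    have hpow : (1 : ℝ) ≤ 2 ^ (2 * N) := one_le_pow₀ one_le_two
    nlinarith [Nat.cast_nonneg (α := ℝ) (Module.finrank ℝ F)]
  refine ⟨8 * 4 ^ (2 * N) * B ^ (2 * N), ?_, fun {Ω v x y ρ} hv hρ hρ₁ hΩ hxy => ?_⟩
  · have h4 : (1 : ℝ) ≤ 4 ^ (2 * N) := one_le_pow₀ (by norm_num)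
    nlinarith [one_le_pow₀ hB₁ (n := 2 * N)]
  · have hle := hv.mul_pow_le_of_dist_le (N := N) (Nat.lt_succ_self _) hρ hρ₁ hΩ
      (inv_pos.2 hB) (mul_inv_cancel₀ hB.ne').le hxy
    rw [inv_pow, ← div_eq_mul_inv, div_le_iff₀ (by positivity)] at hle
    linarith

variable (F) in
theorem exists_harnack :
    ∃ C : ℝ, 0 < C ∧ ∀ {c : F} {δ : ℝ} {v : F → ℝ}, 0 < δ → δ ≤ 1 →
      IsNonnegViscSolution (ball c δ) v →
      ∀ x ∈ ball c (δ / 2), ∀ y ∈ ball c (δ / 2), v x + δ ≤ C * (v y + δ) := by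
  obtain ⟨C, hC, hlocal⟩ := exists_harnack_of_dist_le F
  refine ⟨(2 * C) ^ 12, by positivity, fun {c δ v} hδ hδ₁ hv x hx y hy => ?_⟩
  have hnear : ∀ x ∈ ball c (δ / 2), ∀ y ∈ ball c (δ / 2), dist x y ≤ δ / 12 →
      v x + δ ≤ 2 * C * (v y + δ) := fun x _ y hy hxy => by
    have hvy : 0 ≤ v y := hv.nonneg y (ball_subset_ball (by linarith) hy)
    have hle := hlocal hv (show 0 < δ / 6 by positivity) (by linarith)
      (closedBall_subset_ball' (by linarith [mem_ball.1 hy]))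
      (show dist x y ≤ δ / 6 / 2 by linarith)
    nlinarith
  refine le_pow_mul_of_forall_dist_le (g := fun x => v x + δ) (convex_ball c (δ / 2))
    (by positivity) hnear 11 x hx y hy ?_
  push_cast
  linarith [dist_triangle_right x y c, mem_ball.1 hx, mem_ball.1 hy]

end IsNonnegViscSolution

end Harnack

/-! ### Solutions of the shifted equation -/

section Shifted

variable {n : ℕ} {μ : ℝ} {e : E n} {U : Set (E n)} {f v : E n → ℝ}

theorem lap_eq_laplacian (φ : E n → ℝ) (x : E n) : lap φ x = Δ φ x := by
  simp [lap, InnerProductSpace.laplacian_eq_iteratedFDeriv_orthonormalBasis φ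
    (EuclideanSpace.basisFun (Fin n) ℝ)]

variable {F : Type*} [NormedAddCommGroup F] [InnerProductSpace ℝ F] [CompleteSpace F]

theorem norm_gradient (φ : F → ℝ) (x : F) : ‖gradient φ x‖ = ‖fderiv ℝ φ x‖ :=
  LinearIsometryEquiv.norm_map _ _

theorem gradient_fun_neg (φ : F → ℝ) (x : F) :
    gradient (fun y => -φ y) x = -gradient φ x := by
  rw [gradient, fderiv_fun_neg, map_neg, gradient]

theorem one_le_norm_add_rpow {V : Type*} [SeminormedAddCommGroup V] {g e : V} (hμ : 0 ≤ μ)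
    (he : ‖e‖ ≤ 1) (hg : 2 ≤ ‖g‖) : 1 ≤ ‖g + e‖ ^ μ :=
  Real.one_le_rpow (by linarith [norm_le_add_norm_add g e]) hμ

theorem gradient_fun_add_const (φ : F → ℝ) (x : F) (a : ℝ) :
    gradient (fun y => φ y + a) x = gradient φ x := by
  rw [gradient, fderiv_add_const, gradient]

theorem touchesAbove_add_const {φ : E n → ℝ} {x : E n} (hmax : IsLocalMax (fun y => v y - φ y) x) :
    TouchesAbove v (fun y => φ y + (v x - φ x)) x :=
  ⟨by ring, hmax.mono fun y hy => by linarith⟩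

namespace ViscSolShift

theorem neg (h : ViscSolShift μ e U f v) :
    ViscSolShift μ (-e) U (fun x => -f x) fun x => -v x := by
  have hnorm (φ : E n → ℝ) (x : E n) :
      ‖gradient (fun y => -φ y) x + e‖ = ‖gradient φ x + -e‖ := by
    rw [gradient_fun_neg, ← norm_neg, neg_add, neg_neg]
  have hlap (φ : E n → ℝ) (x : E n) : lap (fun y => -φ y) x = -lap φ x := by
    simpa only [lap_eq_laplacian] using! congrFun (InnerProductSpace.laplacian_neg (f := φ)) x
  intro φ hφ x hx
  have hφ' := h (fun y => -φ y) hφ.neg x hx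
  rw [hnorm, hlap] at hφ'
  refine ⟨fun ht => ?_, fun ht => ?_⟩
  · have hle := hφ'.2 ⟨by linarith [ht.1], ht.2.mono fun y hy => by linarith⟩
    linarith
  · have hle := hφ'.1 ⟨by linarith [ht.1], ht.2.mono fun y hy => by linarith⟩
    linarith

theorem isViscSubsolution (h : ViscSolShift μ e U f v) (hμ : 0 ≤ μ) (he : ‖e‖ ≤ 1)
    (hf : ∀ x ∈ U, -1 ≤ f x) : IsViscSubsolution 2 (-1) U v := by
  intro φ hφ x hx hmax hgrad
  have hlap_eq : lap (fun y => φ y + (v x - φ x)) x = Δ φ x := by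
    rw [lap_eq_laplacian]
    simpa using! hφ.contDiffAt.laplacian_add (contDiff_const (c := v x - φ x)).contDiffAt
  have hle := (h _ (hφ.add contDiff_const) x hx).2 (touchesAbove_add_const hmax)
  rw [gradient_fun_add_const, hlap_eq] at hle
  have hpow : 1 ≤ ‖gradient φ x + e‖ ^ μ :=
    one_le_norm_add_rpow hμ he (norm_gradient φ x ▸ hgrad)
  by_contra! hlt
  nlinarith [hf x hx]

theorem isNonnegViscSolution (h : ViscSolShift μ e U f v) (hμ : 0 ≤ μ) (he : ‖e‖ ≤ 1)
    (hf : ∀ x ∈ U, |f x| ≤ 1) (hcont : ContinuousOn v U) (hnonneg : ∀ x ∈ U, 0 ≤ v x) :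
    IsNonnegViscSolution U v where
  continuousOn := hcont
  nonneg := hnonneg
  isViscSubsolution := h.isViscSubsolution hμ he fun x hx => (abs_le.1 (hf x hx)).1
  isViscSubsolution_neg := h.neg.isViscSubsolution hμ (by rwa [norm_neg]) fun x hx =>
    neg_le_neg (abs_le.1 (hf x hx)).2

end ViscSolShift

end Shifted

theorem harnack_shifted_general (n : ℕ) :
    ∃ C : ℝ, 0 < C ∧
      ∀ (μ δ : ℝ) (c e : E n) (f v : E n → ℝ),
        0 ≤ μ → 0 < δ → δ ≤ 1 → ‖e‖ ≤ 1 →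
        (∀ x ∈ ball c δ, |f x| ≤ 1) →
        ContinuousOn v (ball c δ) →
        (∀ x ∈ ball c δ, 0 ≤ v x) →
        ViscSolShift μ e (ball c δ) f v →
        ∀ x ∈ ball c (δ / 2), ∀ y ∈ ball c (δ / 2), v x + δ ≤ C * (v y + δ) := by
  obtain ⟨C, hC, hharnack⟩ := IsNonnegViscSolution.exists_harnack (E n)
  exact ⟨C, hC, fun μ δ c e f v hμ hδ hδ₁ he hf hcont hnonneg hsol =>
    hharnack hδ hδ₁ (hsol.isNonnegViscSolution hμ he hf hcont hnonneg)⟩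

/-- Lemma 2.8: Harnack inequality for `|∇v + e|^μ Δv = f` in `B_δ`.
The conclusion `sup_{B_{δ/2}} v ≤ C (inf_{B_{δ/2}} v + 2δ)` is stated pointwise. -/
theorem harnack_shifted (n : ℕ) (μ : ℝ) (hμ : 0 ≤ μ) :
    ∃ C : ℝ, 0 < C ∧
      ∀ (δ : ℝ) (e : E n) (f v : E n → ℝ),
        0 < δ → δ < 1 → ‖e‖ = 1 →
        ContinuousOn f (ball (0 : E n) δ) →
        (∀ x ∈ ball (0 : E n) δ, |f x| ≤ 1) →
        ContinuousOn v (ball (0 : E n) δ) →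
        (∀ x ∈ ball (0 : E n) δ, 0 ≤ v x) →
        ViscSolShift μ e (ball 0 δ) f v →
        ∀ x ∈ ball (0 : E n) (δ / 2), ∀ y ∈ ball (0 : E n) (δ / 2),
          v x ≤ C * (v y + 2 * δ) := by
  obtain ⟨C, hC, hharnack⟩ := harnack_shifted_general n
  refine ⟨C, hC, fun δ e f v hδ hδ₁ he _ hf hcont hnonneg hsol x hx y hy => ?_⟩
  nlinarith [hharnack μ δ 0 e f v hμ hδ hδ₁.le he.le hf hcont hnonneg hsol x hx y hy]
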